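/- arXiv:1403.6385 — 3 statements merged into one kernel-verified Lean document; each statement's English description precedes it below -/
import Mathlib

section
/- Let d, m ∈ ℕ, c, c̄, c̃, T ∈ [0,∞), p ∈ [2,∞), let O ⊆ ℝ^d be Borel, let μ : O → ℝ^d and σ : O → ℝ^{d×m} be Borel measurable, let (Ω, 𝓕, ℙ, (𝓕_t)_{t∈[0,T]}) be a filtered probability space, let W : [0,T]×Ω → ℝ^m be a standard (𝓕_t)-Brownian motion, let ξ : Ω → O be 𝓕₀-measurable with ‖ ‖ξ‖ + ‖μ(ξ)‖ ‖_{L^{(c̄ + max{1, c̄})·p}(Ω;ℝ)} < ∞, assume for all x, y ∈ O that ‖σ(x)‖_{HS} ≤ c̃(1+‖x‖^{c̄}), that ⟨x−y, μ(x)−μ(y)⟩ ≤ c‖x−y‖², and that ⟨x, μ(x)⟩ + (((c̄ + max{1, c̄})·p − 1)/2)·‖σ(x)‖_{HS}² ≤ c̃(1+‖x‖²), and assume that for every t ∈ (0, 1/c) the map O ∋ x ↦ x − t·μ(x) ∈ ℝ^d is surjective. Then there exists a unique family of stochastic processes Y^h : (ℕ₀ ∩ [0, T/h])×Ω → O, h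 ∈ (0,T] ∩ (0, 1/c), satisfying Y₀^h = ξ and Y_n^h = Y_{n−1}^h + μ(Y_n^h)·h + σ(Y_{n−1}^h)(W_{nh} − W_{(n−1)h}) for all n ∈ ℕ ∩ [0, T/h], and it holds that sup_{h∈(0,T]∩(0,1/(4c)]} ‖ sup_{n∈ℕ₀∩[0,T/h]} ‖Y_n^h‖ ‖_{L^p(Ω;ℝ)} < ∞. -/
open MeasureTheory ProbabilityTheory Filter Set
open scoped ENNReal NNReal RealInnerProductSpace

noncomputable section

attribute [local instance] Matrix.frobeniusSeminormedAddCommGroup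
  Matrix.frobeniusNormedAddCommGroup

/-- Action of a `d × m` matrix on a vector of `EuclideanSpace ℝ (Fin m)`. -/
def matMulVec {d m : ℕ} (A : Matrix (Fin d) (Fin m) ℝ) (v : EuclideanSpace ℝ (Fin m)) :
    EuclideanSpace ℝ (Fin d) :=
  (EuclideanSpace.equiv (Fin d) ℝ).symm (A.mulVec ((EuclideanSpace.equiv (Fin m) ℝ) v))

/-- The drift-implicit Euler scheme with initial value `ξ`, drift `b`, diffusion `σ`
and driving noise `W`, for all step sizes `h ∈ (0,T] ∩ (0, 1/cdrift)`. -/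
def ImplicitEulerScheme {Ω : Type*} (d m : ℕ) (T cdrift : ℝ)
    (O : Set (EuclideanSpace ℝ (Fin d)))
    (b : EuclideanSpace ℝ (Fin d) → EuclideanSpace ℝ (Fin d))
    (σ : EuclideanSpace ℝ (Fin d) → Matrix (Fin d) (Fin m) ℝ)
    (ξ : Ω → EuclideanSpace ℝ (Fin d))
    (W : ℝ → Ω → EuclideanSpace ℝ (Fin m))
    (Y : ℝ → ℕ → Ω → EuclideanSpace ℝ (Fin d)) : Prop :=
  ∀ h : ℝ, h ∈ Set.Ioc (0:ℝ) T → h * cdrift < 1 →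
    (∀ ω, Y h 0 ω = ξ ω) ∧
    ∀ n : ℕ, 1 ≤ n → (n : ℝ) ≤ T / h → ∀ ω,
      Y h n ω ∈ O ∧
      Y h n ω = Y h (n - 1) ω + h • b (Y h n ω)
        + matMulVec (σ (Y h (n - 1) ω)) (W (n * h) ω - W (((n : ℕ) - 1 : ℕ) * h) ω)

lemma gauss_poly_int (p : Polynomial ℝ) :
    Integrable (fun x => p.eval x) (gaussianReal 0 1) := by
  induction p using Polynomial.induction_on' with
  | add p q hp hq => exact (hp.add hq).congr (ae_of_all _ fun x => by simp)
  | monomial n a =>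
    simp only [Polynomial.eval_monomial]
    refine Integrable.const_mul ?_ a
    have h := (memLp_id_gaussianReal (μ := 0) (v := 1) (n : ℝ≥0)).integrable_norm_pow'
      (p := n)
    refine Integrable.mono' h (by fun_prop) (ae_of_all _ fun x => ?_)
    simp

lemma gauss_poly_int' (p : Polynomial ℝ) :
    Integrable (fun x => p.eval x * gaussianPDFReal 0 1 x) := by
  have h := gauss_poly_int p
  rw [gaussianReal_of_var_ne_zero _ one_ne_zero,
    integrable_withDensity_iff_integrable_smul' (measurable_gaussianPDF 0 1)
      (ae_of_all _ fun _ ↦ gaussianPDF_lt_top)] at h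
  refine h.congr (ae_of_all _ fun x => ?_)
  simp [toReal_gaussianPDF, mul_comm]

lemma gauss_stein (p : Polynomial ℝ) :
    ∫ x, x * p.eval x ∂(gaussianReal 0 1) = ∫ x, p.derivative.eval x ∂(gaussianReal 0 1) := by
  rw [integral_gaussianReal_eq_integral_smul one_ne_zero,
    integral_gaussianReal_eq_integral_smul one_ne_zero]
  have key := integral_mul_deriv_eq_deriv_mul_of_integrable
    (u := fun x => p.eval x) (u' := fun x => p.derivative.eval x)
    (v := fun x => gaussianPDFReal 0 1 x) (v' := fun x => - x * gaussianPDFReal 0 1 x)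
    (fun x _ => p.hasDerivAt x) (fun x _ => ?_) ?_ ?_ ?_
  · have : ∫ x, gaussianPDFReal 0 1 x • (x * p.eval x)
        = - ∫ x, p.eval x * (- x * gaussianPDFReal 0 1 x) := by
      rw [← integral_neg]
      congr 1; ext x; simp only [smul_eq_mul]; ring
    rw [this, key, neg_neg]
    congr 1; ext x; simp only [smul_eq_mul]; ring
  · simp only [gaussianPDFReal_def]
    have h1 : HasDerivAt (fun x : ℝ => -(x - 0) ^ 2 / (2 * ((1 : ℝ≥0) : ℝ))) (-x) x := by
      have := ((((hasDerivAt_id x).sub_const 0).pow 2).neg).div_const (2 * ((1 : ℝ≥0) : ℝ))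
      refine this.congr_deriv ?_
      norm_num [id]; ring
    have := (h1.exp).const_mul (√(2 * Real.pi * ((1 : ℝ≥0) : ℝ)))⁻¹
    convert this using 1
    ring
  · have := gauss_poly_int' (-Polynomial.X * p)
    refine this.congr (ae_of_all _ fun x => ?_)
    simp; ring
  · exact gauss_poly_int' _
  · exact gauss_poly_int' _

/-- moments of `a + b N` -/
def gmom (a b : ℝ) (j : ℕ) : ℝ := ∫ x, (a + b * x) ^ j ∂(gaussianReal 0 1)

lemma gmom_int (a b : ℝ) (j : ℕ) :
    Integrable (fun x => (a + b * x) ^ j) (gaussianReal 0 1) := by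
  exact (gauss_poly_int ((Polynomial.C a + Polynomial.C b * Polynomial.X) ^ j)).congr
    (ae_of_all _ fun x => by simp)

lemma gmom_rec1 (a b : ℝ) : gmom a b 1 = a := by
  have h := gauss_stein (Polynomial.C 1)
  have h2 : Integrable (fun x : ℝ => x) (gaussianReal 0 1) := by
    simpa using gauss_poly_int Polynomial.X
  simp only [gmom, pow_one]
  rw [integral_add (integrable_const _) (h2.const_mul b), integral_const_mul]
  simp

lemma gmom_rec (a b : ℝ) (j : ℕ) :
    gmom a b (j + 2) = a * gmom a b (j + 1) + b ^ 2 * (j + 1) * gmom a b j := by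
  have h := gauss_stein ((Polynomial.C a + Polynomial.C b * Polynomial.X) ^ (j + 1))
  have e2 : ∫ x, (a + b * x) ^ j * (b * ((j : ℝ) + 1)) ∂(gaussianReal 0 1)
      = ∫ x, x * (a + b * x) ^ (j + 1) ∂(gaussianReal 0 1) := by
    convert h.symm using 2
    · ext x; simp [Polynomial.derivative_pow]; ring
    · simp
  have h2 : Integrable (fun x : ℝ => x * (a + b * x) ^ (j + 1)) (gaussianReal 0 1) := by
    exact (gauss_poly_int
      (Polynomial.X * (Polynomial.C a + Polynomial.C b * Polynomial.X) ^ (j + 1))).congr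
        (ae_of_all _ fun x => by simp)
  rw [integral_mul_const] at e2
  have e3 : gmom a b (j + 2) = a * gmom a b (j + 1)
      + b * ∫ x, x * (a + b * x) ^ (j + 1) ∂(gaussianReal 0 1) := by
    unfold gmom
    rw [← integral_const_mul, ← integral_const_mul,
      ← integral_add ((gmom_int a b (j+1)).const_mul a) (h2.const_mul b)]
    congr 1; ext x; ring
  rw [e3, ← e2]; simp only [gmom]; ring

lemma gmom_even_nonneg (a b : ℝ) (k : ℕ) : 0 ≤ gmom a b (2 * k) :=
  integral_nonneg fun x => by
    simp only [Pi.zero_apply, pow_mul]; positivity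

lemma gmom_step (a b : ℝ) (k : ℕ) :
    gmom a b (2 * k + 2) ≤ (a ^ 2 + (4 * k + 1) * b ^ 2) * gmom a b (2 * k) := by
  rcases k with _ | k
  · have h0 : gmom a b 0 = 1 := by simp [gmom]
    have := gmom_rec a b 0
    simp [gmom_rec1, h0] at this ⊢
    nlinarith
  · have h1 := gmom_rec a b (2 * k + 2)
    have h2 := gmom_rec a b (2 * k + 1)
    have h3 := gmom_rec a b (2 * k)
    have h4 := gmom_even_nonneg a b k
    have h5 := gmom_even_nonneg a b (k + 1)
    simp only [mul_add, mul_one, add_assoc, Nat.reduceAdd] at *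
    push_cast at *
    have h6 : a * gmom a b (2 * k + 1) ≤ gmom a b (2 * k + 2) := by
      rw [h3]
      have : 0 ≤ b ^ 2 * (2 * (k:ℝ) + 1) * gmom a b (2 * k) := by positivity
      linarith
    have h7 : 0 ≤ b ^ 2 * (2 * (k:ℝ) + 2) := by positivity
    have h8 := mul_le_mul_of_nonneg_left h6 h7
    rw [h1, h2]
    nlinarith

lemma bern_aux (A δ : ℝ) (n : ℕ) (hδ : 0 ≤ δ) (hA : δ ≤ A) :
    (A - δ) ^ n * (A + n * δ) ≤ A ^ (n + 1) := by
  induction n with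
  | zero => simp
  | succ n ih =>
    have h0 : 0 ≤ (A - δ) ^ n := pow_nonneg (by linarith) n
    have hA0 : 0 ≤ A := by linarith
    have h1 : (A - δ) * (A + (n + 1) * δ) ≤ A * (A + n * δ) := by
      have : 0 ≤ ((n : ℝ) + 1) * δ ^ 2 := by positivity
      nlinarith
    calc (A - δ) ^ (n + 1) * (A + ((n + 1 : ℕ) : ℝ) * δ)
        = (A - δ) ^ n * ((A - δ) * (A + (n + 1) * δ)) := by push_cast; ring
      _ ≤ (A - δ) ^ n * (A * (A + n * δ)) := by gcongr
      _ = A * ((A - δ) ^ n * (A + n * δ)) := by ring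
      _ ≤ A * A ^ (n + 1) := by gcongr
      _ = _ := by ring

/-- Sharp one dimensional moment bound. -/
lemma gmom_bound (a b : ℝ) (k : ℕ) :
    gmom a b (2 * k) ≤ (a ^ 2 + (2 * k - 1) * b ^ 2) ^ k := by
  induction k with
  | zero => simp [gmom]
  | succ k ih =>
    rcases k with _ | k
    · have h0 : gmom a b 0 = 1 := by simp [gmom]
      have := gmom_step a b 0
      simp [h0] at this ⊢
      nlinarith
    · refine (gmom_step a b (k + 1)).trans ?_
      have h1 : 0 ≤ a ^ 2 + (4 * ((k + 1 : ℕ) : ℝ) + 1) * b ^ 2 := by positivity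
      refine (mul_le_mul_of_nonneg_left ih h1).trans ?_
      have hk : (0 : ℝ) ≤ k := Nat.cast_nonneg k
      have := bern_aux (a ^ 2 + (2 * ((k + 1 + 1 : ℕ) : ℝ) - 1) * b ^ 2) (2 * b ^ 2) (k + 1)
        (by positivity) (by push_cast; nlinarith [sq_nonneg a, sq_nonneg b, mul_nonneg hk (sq_nonneg b)])
      refine le_trans (le_of_eq ?_) this
      push_cast
      rw [mul_comm]
      congr 1
      · congr 1; ring
      · ring

lemma gauss_dimone (a : ℝ) (v : ℝ≥0) (k : ℕ) :
    ∫⁻ x, ENNReal.ofReal ((a + x) ^ (2 * k)) ∂(gaussianReal 0 v)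
      ≤ ENNReal.ofReal ((a ^ 2 + (2 * k - 1) * v) ^ k) := by
  have hv : gaussianReal 0 v = (gaussianReal 0 1).map (fun x => (√(v:ℝ)) * x) := by
    rw [gaussianReal_map_const_mul]
    congr 1
    · simp
    · ext; simp
  rw [hv, lintegral_map (by fun_prop) (by fun_prop),
    ← ofReal_integral_eq_lintegral_ofReal (gmom_int a (√(v:ℝ)) (2 * k))
      (ae_of_all _ fun x => by simp only [Pi.zero_apply, pow_mul]; positivity)]
  refine ENNReal.ofReal_le_ofReal ?_
  have := gmom_bound a (√(v:ℝ)) k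
  rwa [Real.sq_sqrt (NNReal.coe_nonneg v)] at this

def gC (k : ℕ) : ℝ≥0∞ := ∫⁻ x, ENNReal.ofReal (x ^ (2 * k)) ∂(gaussianReal 0 1)

lemma gC_top (k : ℕ) : gC k ≠ ⊤ := by
  have := gauss_dimone 0 1 k
  simp only [zero_add] at this
  exact (this.trans_lt ENNReal.ofReal_lt_top).ne

lemma gC_zero (k : ℕ) : gC k ≠ 0 := by
  intro h
  rw [gC, lintegral_eq_zero_iff (by fun_prop)] at h
  have := nullSingletonClass_gaussianReal (μ := 0) (v := 1) one_ne_zero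
  have h2 : ∀ᵐ x ∂(gaussianReal 0 1), x ≠ 0 := by
    simp [ae_iff]
  have h3 : ∀ᵐ x ∂(gaussianReal 0 1), False := by
    filter_upwards [h, h2] with x hx hx2
    simp at hx
    have : 0 < x ^ (2 * k) := by
      rw [pow_mul]; positivity
    linarith
  simp only [ae_iff, not_false_eq_true, Set.ofPred_true, measure_univ, one_ne_zero] at h3

lemma std_inner {d : ℕ} (v : EuclideanSpace ℝ (Fin d)) (k : ℕ) :
    ∫⁻ g, ENNReal.ofReal (⟪v, g⟫ ^ 2) ^ k ∂(stdGaussian (EuclideanSpace ℝ (Fin d)))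
      = gC k * ENNReal.ofReal (‖v‖ ^ 2) ^ k := by
  have h := IsGaussian.map_eq_gaussianReal (μ := stdGaussian (EuclideanSpace ℝ (Fin d)))
    (innerSL ℝ v)
  rw [integral_strongDual_stdGaussian, variance_dual_stdGaussian] at h
  have hv : gaussianReal 0 (‖innerSL ℝ v‖ ^ 2).toNNReal
      = (gaussianReal 0 1).map (fun x => ‖v‖ * x) := by
    rw [gaussianReal_map_const_mul]
    congr 1
    · simp
    · ext; simp
  rw [hv] at h
  have e1 : ∫⁻ g, ENNReal.ofReal (⟪v, g⟫ ^ 2) ^ k ∂(stdGaussian (EuclideanSpace ℝ (Fin d)))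
      = ∫⁻ x, ENNReal.ofReal (x ^ 2) ^ k
        ∂((stdGaussian (EuclideanSpace ℝ (Fin d))).map (innerSL ℝ v)) := by
    rw [lintegral_map (by fun_prop) (by fun_prop)]
    simp
  rw [e1, h, lintegral_map (by fun_prop) (by fun_prop), gC,
    ← lintegral_mul_const _ (by fun_prop)]
  congr 1; ext x
  rw [← ENNReal.ofReal_pow (by positivity), ← ENNReal.ofReal_pow (by positivity),
    ← ENNReal.ofReal_mul (by rw [pow_mul]; positivity)]
  congr 1; ring

lemma mink2 {α : Type*} [MeasurableSpace α] (μ : Measure α) (k : ℕ) (hk : 1 ≤ k)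
    (f g : α → ℝ≥0∞) (hf : Measurable f) (hg : Measurable g) (C a b : ℝ≥0∞)
    (h1 : ∫⁻ x, f x ^ k ∂μ ≤ C * a ^ k) (h2 : ∫⁻ x, g x ^ k ∂μ ≤ C * b ^ k) :
    ∫⁻ x, (f x + g x) ^ k ∂μ ≤ C * (a + b) ^ k := by
  have hk' : (1 : ℝ) ≤ k := by exact_mod_cast hk
  have hk0 : (k : ℝ) ≠ 0 := by positivity
  have h := ENNReal.lintegral_Lp_add_le (μ := μ) hf.aemeasurable hg.aemeasurable hk'
  simp only [Pi.add_apply, ENNReal.rpow_natCast] at h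
  have hh : ∀ I c : ℝ≥0∞, I ≤ C * c ^ k → I ^ (1 / (k : ℝ)) ≤ C ^ (1 / (k : ℝ)) * c := by
    intro I c hI
    calc I ^ (1 / (k : ℝ)) ≤ (C * c ^ k) ^ (1 / (k : ℝ)) := by gcongr
      _ = _ := by
        rw [ENNReal.mul_rpow_of_nonneg _ _ (by positivity), ← ENNReal.rpow_natCast c,
          ← ENNReal.rpow_mul]
        simp [hk0]
  have h3 := h.trans (add_le_add (hh _ _ h1) (hh _ _ h2))
  rw [← mul_add] at h3
  have h4 := ENNReal.rpow_le_rpow h3 (by positivity : (0 : ℝ) ≤ k)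
  rw [ENNReal.mul_rpow_of_nonneg _ _ (by positivity), ← ENNReal.rpow_mul, ← ENNReal.rpow_mul] at h4
  simpa [hk0] using h4

lemma std_sum {d : ℕ} {ι : Type*} (s : Finset ι) (v : ι → EuclideanSpace ℝ (Fin d)) (k : ℕ)
    (hk : 1 ≤ k) :
    ∫⁻ g, (∑ i ∈ s, ENNReal.ofReal (⟪v i, g⟫ ^ 2)) ^ k ∂(stdGaussian (EuclideanSpace ℝ (Fin d)))
      ≤ gC k * (∑ i ∈ s, ENNReal.ofReal (‖v i‖ ^ 2)) ^ k := by
  classical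
  induction s using Finset.induction_on with
  | empty => simp [show k ≠ 0 by omega]
  | insert a s ha ih =>
    simp only [Finset.sum_insert ha]
    exact mink2 _ k hk _ _ (by fun_prop) (by fun_prop) _ _ _ (std_inner _ _).le ih

lemma frob_sq {d m : ℕ} (A : Matrix (Fin d) (Fin m) ℝ) :
    ‖A‖ ^ 2 = ∑ i, ∑ j, A i j ^ 2 := by
  rw [Matrix.frobenius_norm_def, ← Real.sqrt_eq_rpow, Real.sq_sqrt (by positivity)]
  simp

/-- Sharp Gaussian (hypercontractive) bound. -/
lemma gauss_vec {d m : ℕ} (ν : Measure (EuclideanSpace ℝ (Fin m))) [IsProbabilityMeasure ν]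
    (h : ℝ) (hh : 0 ≤ h)
    (hν : ∀ l : EuclideanSpace ℝ (Fin m),
      ν.map (fun u => ⟪l, u⟫) = gaussianReal 0 (Real.toNNReal (h * ‖l‖ ^ 2)))
    (y : EuclideanSpace ℝ (Fin d)) (A : Matrix (Fin d) (Fin m) ℝ) (k : ℕ) (hk : 1 ≤ k) :
    ∫⁻ u, ENNReal.ofReal (1 + ‖y + matMulVec A u‖ ^ 2) ^ k ∂ν
      ≤ ENNReal.ofReal (1 + (‖y‖ ^ 2 + (2 * k - 1) * h * ‖A‖ ^ 2)) ^ k := by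
  have hk' : (1 : ℝ) ≤ k := by exact_mod_cast hk
  have hmeas : Measurable (fun u : EuclideanSpace ℝ (Fin m) => matMulVec A u) := by
    unfold matMulVec
    have : Continuous fun u : EuclideanSpace ℝ (Fin m) =>
      (EuclideanSpace.equiv (Fin d) ℝ).symm (A.mulVec ((EuclideanSpace.equiv (Fin m) ℝ) u)) := by
      fun_prop
    exact this.measurable
  set col : Fin m → EuclideanSpace ℝ (Fin d) := fun j => WithLp.toLp 2 (fun i => A i j) with hcol
  have key : gC k * ∫⁻ u, ENNReal.ofReal (‖y + matMulVec A u‖ ^ 2) ^ k ∂ν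
      ≤ gC k * ENNReal.ofReal (‖y‖ ^ 2 + (2 * k - 1) * h * ‖A‖ ^ 2) ^ k := by
    rw [← lintegral_const_mul _ (by fun_prop)]
    simp_rw [← std_inner]
    rw [lintegral_lintegral_swap (by fun_prop)]
    -- the vectors
    let w : Option (Fin m) → EuclideanSpace ℝ (Fin d) := fun o =>
      o.elim y (fun j => (√((2 * k - 1) * h)) • col j)
    have hc : 0 ≤ (2 * (k:ℝ) - 1) * h := mul_nonneg (by linarith) hh
    have hs := std_sum Finset.univ w k hk
    have e1 : ∑ i, ENNReal.ofReal (‖w i‖ ^ 2)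
        = ENNReal.ofReal (‖y‖ ^ 2 + (2 * k - 1) * h * ‖A‖ ^ 2) := by
      rw [← ENNReal.ofReal_sum_of_nonneg (fun _ _ => by positivity), Fintype.sum_option]
      congr 2
      simp only [w, Option.elim, norm_smul, mul_pow, ← Finset.mul_sum]
      rw [Real.norm_of_nonneg (Real.sqrt_nonneg _), Real.sq_sqrt hc, frob_sq, Finset.sum_comm]
      simp [hcol, EuclideanSpace.norm_sq_eq]
    rw [e1] at hs
    refine le_trans (lintegral_mono fun g => ?_) hs
    -- inner bound
    set l : EuclideanSpace ℝ (Fin m) := WithLp.toLp 2 (fun j => ⟪col j, g⟫) with hl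
    have e2 : ∀ u, ⟪y + matMulVec A u, g⟫ = ⟪y, g⟫ + ⟪l, u⟫ := by
      intro u
      rw [inner_add_left]
      congr 1
      have e5 : ∀ i, (matMulVec A u) i = ∑ j, A i j * u j := fun i => rfl
      simp only [PiLp.inner_apply, hl, hcol, e5]
      simp only [Finset.mul_sum, RCLike.inner_apply, conj_trivial]
      rw [Finset.sum_comm]
      exact Finset.sum_congr rfl fun _ _ => Finset.sum_congr rfl fun _ _ => by ring
    have e3 : ∫⁻ u, ENNReal.ofReal (⟪y + matMulVec A u, g⟫ ^ 2) ^ k ∂ν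
        = ∫⁻ x, ENNReal.ofReal ((⟪y, g⟫ + x) ^ (2 * k)) ∂(ν.map (fun u => ⟪l, u⟫)) := by
      rw [lintegral_map (by fun_prop) (by fun_prop)]
      congr 1; ext u
      rw [e2, ← ENNReal.ofReal_pow (by positivity), pow_mul]
    rw [e3, hν]
    refine (gauss_dimone _ _ _).trans ?_
    rw [Real.coe_toNNReal _ (by positivity), ENNReal.ofReal_pow (by
      have : 0 ≤ (2 * (k:ℝ) - 1) * (h * ‖l‖ ^ 2) := mul_nonneg (by linarith) (by positivity)
      positivity), ← ENNReal.ofReal_sum_of_nonneg (fun _ _ => by positivity)]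
    refine le_of_eq ?_
    congr 2
    rw [Fintype.sum_option]
    simp only [w, Option.elim, inner_smul_left, mul_pow, ← Finset.mul_sum]
    congr 1
    simp only [conj_trivial]
    rw [Real.sq_sqrt hc, hl, EuclideanSpace.norm_sq_eq]
    simp
    ring
  have key2 := (ENNReal.mul_le_mul_iff_right (gC_zero k) (gC_top k)).1 key
  have := mink2 ν k hk (fun _ => 1) (fun u => ENNReal.ofReal (‖y + matMulVec A u‖ ^ 2))
    (by fun_prop) (by fun_prop) 1 1 _ (by simp) (by rw [one_mul]; exact key2)
  have hc : 0 ≤ (2 * (k:ℝ) - 1) * h * ‖A‖ ^ 2 :=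
    mul_nonneg (mul_nonneg (by linarith) hh) (by positivity)
  rw [ENNReal.ofReal_add zero_le_one (by positivity), ENNReal.ofReal_one]
  simp_rw [ENNReal.ofReal_add zero_le_one (sq_nonneg _), ENNReal.ofReal_one]
  simpa using this
set_option maxHeartbeats 4000000


/-- running maximum -/
def rmax {Ω : Type*} (S : ℕ → Ω → ℝ) : ℕ → Ω → ℝ
  | 0 => S 0
  | n + 1 => fun ω => max (rmax S n ω) (S (n + 1) ω)

lemma le_rmax {Ω : Type*} (S : ℕ → Ω → ℝ) (N n : ℕ) (hn : n ≤ N) (ω : Ω) :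
    S n ω ≤ rmax S N ω := by
  induction N with
  | zero => obtain rfl : n = 0 := by omega
            exact le_rfl
  | succ N ih =>
    rcases Nat.lt_or_ge N n with h | h
    · obtain rfl : n = N + 1 := by omega
      exact le_max_right _ _
    · exact (ih h).trans (le_max_left _ _)

lemma doob_pt (θ m s : ℝ) (h0 : 0 < θ) (h1 : θ < 1) (hm : 0 < m) (hs : 0 < s) :
    (max m s) ^ θ + θ / (1 - θ) * (max m s) ^ (θ - 1) * s
      ≤ m ^ θ + θ / (1 - θ) * m ^ (θ - 1) * s := by
  rcases le_total s m with h | h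
  · rw [max_eq_left h]
  · rw [max_eq_right h]
    have h2 : 0 < 1 - θ := by linarith
    obtain ⟨x, rfl⟩ : ∃ x, s = m * x := ⟨s / m, by field_simp⟩
    have hx : 0 < x := by
      by_contra hx; push Not at hx; nlinarith
    have hb := rpow_one_add_le_one_add_mul_self (s := x - 1) (p := θ) (by linarith) h0.le h1.le
    rw [show 1 + (x - 1) = x by ring] at hb
    have e1 : (m * x) ^ (θ - 1) * (m * x) = (m * x) ^ θ := by
      rw [Real.rpow_sub_one hs.ne']; field_simp
    have e2 : m ^ (θ - 1) * (m * x) = m ^ θ * x := by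
      rw [Real.rpow_sub_one hm.ne']; field_simp
    rw [mul_assoc, e1, mul_assoc, e2, Real.mul_rpow hm.le hx.le]
    have hp : 0 < m ^ θ := Real.rpow_pos_of_pos hm _
    have e3 : x ^ θ + θ / (1 - θ) * x ^ θ ≤ 1 + θ / (1 - θ) * x := by
      have : x ^ θ + θ / (1 - θ) * x ^ θ = x ^ θ / (1 - θ) := by field_simp; ring
      rw [this, show 1 + θ / (1 - θ) * x = (1 + θ * (x - 1)) / (1 - θ) by field_simp; ring]
      gcongr
    nlinarith

lemma doob_theta {Ω : Type*} {m0 : MeasurableSpace Ω} (P : Measure Ω)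
    (F : ℕ → MeasurableSpace Ω) (hF : ∀ n, F n ≤ m0) (hFm : ∀ n, F n ≤ F (n + 1))
    (S : ℕ → Ω → ℝ) (hpos : ∀ n ω, 0 < S n ω) (N : ℕ)
    (hmeas : ∀ n ≤ N, Measurable[F n] (S n))
    (hstep : ∀ n < N, ∀ g : Ω → ℝ≥0∞, Measurable[F n] g →
      ∫⁻ ω, g ω * ENNReal.ofReal (S (n + 1) ω) ∂P ≤ ∫⁻ ω, g ω * ENNReal.ofReal (S n ω) ∂P)
    (θ : ℝ) (h0 : 0 < θ) (h1 : θ < 1) :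
    ∫⁻ ω, ENNReal.ofReal (rmax S N ω ^ θ) ∂P
      ≤ ENNReal.ofReal (1 / (1 - θ)) * ∫⁻ ω, ENNReal.ofReal (S 0 ω ^ θ) ∂P := by
  have h2 : 0 < 1 - θ := by linarith
  have hMpos : ∀ n ω, 0 < rmax S n ω := fun n ω => (hpos 0 ω).trans_le (le_rmax S n 0 (Nat.zero_le _) ω)
  have hMm : ∀ n ≤ N, Measurable[F n] (rmax S n) := by
    intro n
    induction n with
    | zero => exact fun h => hmeas 0 h
    | succ n ih =>
      intro h
      exact Measurable.max ((ih (by omega)).mono (hFm n) le_rfl) (hmeas _ h)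
  have hH : ∀ n ≤ N, ∫⁻ ω, (ENNReal.ofReal (rmax S n ω ^ θ)
      + ENNReal.ofReal (θ / (1 - θ) * rmax S n ω ^ (θ - 1)) * ENNReal.ofReal (S n ω)) ∂P
      ≤ ENNReal.ofReal (1 / (1 - θ)) * ∫⁻ ω, ENNReal.ofReal (S 0 ω ^ θ) ∂P := by
    intro n
    induction n with
    | zero =>
      intro h
      have := (hmeas 0 h).mono (hF 0) le_rfl
      rw [← lintegral_const_mul _ (by fun_prop)]
      refine lintegral_mono fun ω => le_of_eq ?_
      have hp := hpos 0 ω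
      have hp2 := Real.rpow_pos_of_pos hp (θ - 1)
      simp only [rmax]
      rw [← ENNReal.ofReal_mul (by positivity), ← ENNReal.ofReal_add (by positivity) (by positivity),
        ← ENNReal.ofReal_mul (by positivity), Real.rpow_sub_one hp.ne']
      congr 1
      field_simp
      ring
    | succ n ih =>
      intro h
      refine le_trans ?_ (ih (by omega))
      have hg : Measurable[F n] (fun ω => ENNReal.ofReal (θ / (1 - θ) * rmax S n ω ^ (θ - 1))) := by
        have := hMm n (by omega)
        fun_prop
      have hr : Measurable (fun ω => ENNReal.ofReal (rmax S n ω ^ θ)) := by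
        have := (hMm n (by omega)).mono (hF n) le_rfl
        fun_prop
      rw [lintegral_add_left hr]
      refine le_trans ?_ (add_le_add le_rfl (hstep n (by omega) _ hg))
      rw [← lintegral_add_left hr]
      refine lintegral_mono fun ω => ?_
      have hs := hpos (n + 1) ω
      have hm := hMpos n ω
      have hmax : 0 < max (rmax S n ω) (S (n + 1) ω) := lt_max_of_lt_left hm
      have a1 := Real.rpow_pos_of_pos hm (θ - 1)
      have a2 := Real.rpow_pos_of_pos hmax (θ - 1)
      simp only [rmax]
      rw [← ENNReal.ofReal_mul (by positivity), ← ENNReal.ofReal_add (by positivity) (by positivity),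
        ← ENNReal.ofReal_mul (by positivity), ← ENNReal.ofReal_add (by positivity) (by positivity)]
      exact ENNReal.ofReal_le_ofReal (doob_pt θ _ _ h0 h1 hm hs)
  exact le_trans (lintegral_mono fun ω => le_self_add) (hH N le_rfl)

lemma meas_matMulVec {d m : ℕ} {α : Type*} [MeasurableSpace α]
    (A : α → Matrix (Fin d) (Fin m) ℝ) (hA : ∀ i j, Measurable (fun x => A x i j))
    (u : α → EuclideanSpace ℝ (Fin m)) (hu : Measurable u) :
    Measurable (fun x => matMulVec (A x) (u x)) := by
  have h : Measurable (fun x => (fun i => ∑ j, A x i j * u x j : Fin d → ℝ)) := by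
    refine measurable_pi_lambda _ fun i => Finset.measurable_fun_sum _ fun j _ => ?_
    have h2 := hA i j
    fun_prop
  exact (WithLp.measurable_toLp 2 _).comp h

lemma one_step {Ω : Type*} (F0 : MeasurableSpace Ω) {m0 : MeasurableSpace Ω} (P : Measure Ω) [IsProbabilityMeasure P]
    {d m : ℕ} (hF0 : F0 ≤ m0)
    (D : Ω → EuclideanSpace ℝ (Fin m)) (hD : Measurable D)
    (hind : Indep (MeasurableSpace.comap D inferInstance) F0 P)
    (h : ℝ) (hh : 0 ≤ h)
    (hlaw : ∀ l : EuclideanSpace ℝ (Fin m),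
      P.map (fun ω => ⟪l, D ω⟫) = gaussianReal 0 (Real.toNNReal (h * ‖l‖ ^ 2)))
    (σ : EuclideanSpace ℝ (Fin d) → Matrix (Fin d) (Fin m) ℝ)
    (hσmeas : ∀ i j, Measurable (fun x => σ x i j))
    (Y : Ω → EuclideanSpace ℝ (Fin d)) (hY : Measurable[F0] Y)
    (g : Ω → ℝ≥0∞) (hg : Measurable[F0] g) (k : ℕ) (hk : 1 ≤ k) :
    ∫⁻ ω, g ω * ENNReal.ofReal (1 + ‖Y ω + matMulVec (σ (Y ω)) (D ω)‖ ^ 2) ^ k ∂P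
      ≤ ∫⁻ ω, g ω * ENNReal.ofReal (1 + (‖Y ω‖ ^ 2 + (2 * k - 1) * h * ‖σ (Y ω)‖ ^ 2)) ^ k ∂P := by
  set X : Ω → ℝ≥0∞ × EuclideanSpace ℝ (Fin d) := fun ω => (g ω, Y ω) with hX
  have hX0 : Measurable[F0] X := hg.prodMk hY
  have hXm : Measurable X := hX0.mono hF0 le_rfl
  have hi : IndepFun X D P := by
    rw [IndepFun_iff_Indep]
    exact indep_of_indep_of_le_left hind.symm hX0.comap_le
  have hmap := (indepFun_iff_map_prod_eq_prod_map_map hXm.aemeasurable hD.aemeasurable).1 hi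
  have : IsProbabilityMeasure (P.map D) := Measure.isProbabilityMeasure_map hD.aemeasurable
  have : IsProbabilityMeasure (P.map X) := Measure.isProbabilityMeasure_map hXm.aemeasurable
  have hm1 : Measurable (fun z : (ℝ≥0∞ × EuclideanSpace ℝ (Fin d)) × EuclideanSpace ℝ (Fin m) =>
      z.1.1 * ENNReal.ofReal (1 + ‖z.1.2 + matMulVec (σ z.1.2) z.2‖ ^ 2) ^ k) := by
    have := meas_matMulVec
      (fun z : (ℝ≥0∞ × EuclideanSpace ℝ (Fin d)) × EuclideanSpace ℝ (Fin m) => σ z.1.2)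
      (fun i j => (hσmeas i j).comp (by fun_prop)) (fun z => z.2) (by fun_prop)
    fun_prop
  have hm2 : Measurable (fun z : (ℝ≥0∞ × EuclideanSpace ℝ (Fin d)) =>
      z.1 * ENNReal.ofReal (1 + (‖z.2‖ ^ 2 + (2 * k - 1) * h * ‖σ z.2‖ ^ 2)) ^ k) := by
    have : Measurable (fun x => ‖σ x‖ ^ 2) := by
      simp_rw [frob_sq]
      exact Finset.measurable_fun_sum _ fun i _ => Finset.measurable_fun_sum _ fun j _ =>
        (hσmeas i j).pow_const 2
    have gen : ∀ q : EuclideanSpace ℝ (Fin d) → ℝ, Measurable q →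
        Measurable (fun z : (ℝ≥0∞ × EuclideanSpace ℝ (Fin d)) =>
          z.1 * ENNReal.ofReal (1 + (‖z.2‖ ^ 2 + (2 * k - 1) * h * q z.2)) ^ k) := by
      intro q hq
      fun_prop
    exact gen (fun x => ‖σ x‖ ^ 2) this
  calc _ = ∫⁻ z, z.1.1 * ENNReal.ofReal (1 + ‖z.1.2 + matMulVec (σ z.1.2) z.2‖ ^ 2) ^ k
        ∂(P.map (fun ω => (X ω, D ω))) := by
        rw [lintegral_map hm1 (hXm.prodMk hD)]
    _ = ∫⁻ x, ∫⁻ u, x.1 * ENNReal.ofReal (1 + ‖x.2 + matMulVec (σ x.2) u‖ ^ 2) ^ k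
          ∂(P.map D) ∂(P.map X) := by
        rw [hmap, lintegral_prod _ hm1.aemeasurable]
    _ ≤ ∫⁻ x, x.1 * ENNReal.ofReal (1 + (‖x.2‖ ^ 2 + (2 * k - 1) * h * ‖σ x.2‖ ^ 2)) ^ k
          ∂(P.map X) := by
        refine lintegral_mono fun x => ?_
        have hmv := meas_matMulVec (fun _ : EuclideanSpace ℝ (Fin m) => σ x.2)
          (fun i j => measurable_const) (fun u => u) measurable_id
        rw [lintegral_const_mul _ (by fun_prop)]
        gcongr
        refine gauss_vec (P.map D) h hh (fun l => ?_) x.2 (σ x.2) k hk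
        rw [Measure.map_map (by fun_prop) hD]
        exact hlaw l
    _ = _ := by rw [lintegral_map hm2 hXm]

lemma fixed_h {Ω : Type*} {m0 : MeasurableSpace Ω} (P : Measure Ω) [IsProbabilityMeasure P]
    {d m : ℕ} (F : ℕ → MeasurableSpace Ω) (hF : ∀ n, F n ≤ m0) (hFm : ∀ n, F n ≤ F (n + 1))
    (N : ℕ) (h : ℝ) (hh : 0 ≤ h)
    (D : ℕ → Ω → EuclideanSpace ℝ (Fin m)) (hD : ∀ n < N, Measurable (D n))
    (hind : ∀ n < N, Indep (MeasurableSpace.comap (D n) inferInstance) (F n) P)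
    (hlaw : ∀ n < N, ∀ l : EuclideanSpace ℝ (Fin m),
      P.map (fun ω => ⟪l, D n ω⟫) = gaussianReal 0 (Real.toNNReal (h * ‖l‖ ^ 2)))
    (σ : EuclideanSpace ℝ (Fin d) → Matrix (Fin d) (Fin m) ℝ)
    (hσmeas : ∀ i j, Measurable (fun x => σ x i j))
    (Y Z : ℕ → Ω → EuclideanSpace ℝ (Fin d))
    (hY : ∀ n ≤ N, Measurable[F n] (Y n)) (hZ : ∀ n ≤ N, Measurable[F n] (Z n))
    (hYZ : ∀ n < N, ∀ ω, Z (n + 1) ω = Y n ω + matMulVec (σ (Y n ω)) (D n ω))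
    (k : ℕ) (hk : 1 ≤ k) (C : ℝ) (hC : 0 ≤ C)
    (hbd : ∀ n ≤ N, ∀ ω, 1 + (‖Y n ω‖ ^ 2 + (2 * k - 1) * h * ‖σ (Y n ω)‖ ^ 2)
      ≤ (1 + C * h) * (1 + ‖Z n ω‖ ^ 2))
    (θ : ℝ) (h0 : 0 < θ) (h1 : θ < 1) :
    ∫⁻ ω, ENNReal.ofReal (rmax (fun n ω => (((1 + C * h) ^ n)⁻¹ * (1 + ‖Z n ω‖ ^ 2)) ^ k) N ω ^ θ) ∂P
      ≤ ENNReal.ofReal (1 / (1 - θ)) * ∫⁻ ω, ENNReal.ofReal (((1 + ‖Z 0 ω‖ ^ 2) ^ k) ^ θ) ∂P := by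
  set S : ℕ → Ω → ℝ := fun n ω => (((1 + C * h) ^ n)⁻¹ * (1 + ‖Z n ω‖ ^ 2)) ^ k with hS
  have hD1 : 0 < (1 + C * h) := by positivity
  have := doob_theta P F hF hFm S (fun n ω => by positivity) N ?_ ?_ θ h0 h1
  · simpa [hS] using this
  · intro n hn
    have := hZ n hn
    fun_prop
  · intro n hn g hg
    set a : ℝ := (((1 + C * h) ^ (n+1))⁻¹) with ha
    have ha0 : 0 < a := by positivity
    have hs := one_step (F n) P (hF n) (D n) (hD n hn) (hind n hn) h hh (hlaw n hn) σ hσmeas (Y n)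
      (hY n hn.le) (fun ω => g ω * ENNReal.ofReal (a ^ k)) (hg.mul_const _) k hk
    refine le_trans (le_of_eq ?_) (hs.trans (lintegral_mono fun ω => ?_))
    · congr 1; ext ω
      simp only [hS]
      rw [hYZ n hn, mul_assoc, mul_pow, ENNReal.ofReal_mul (by positivity),
        ← ENNReal.ofReal_pow (by positivity)]
    · simp only [hS]
      have hb := hbd n hn.le ω
      rw [mul_assoc]
      refine mul_le_mul_right ?_ _
      have hk' : (1 : ℝ) ≤ k := by exact_mod_cast hk
      have hc : 0 ≤ (2 * (k:ℝ) - 1) * h * ‖σ (Y n ω)‖ ^ 2 :=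
        mul_nonneg (mul_nonneg (by linarith) hh) (by positivity)
      rw [← ENNReal.ofReal_pow (by positivity), ← ENNReal.ofReal_mul (by positivity), ← mul_pow]
      refine ENNReal.ofReal_le_ofReal ?_
      refine pow_le_pow_left₀ (by positivity) ?_ k
      calc a * (1 + (‖Y n ω‖ ^ 2 + (2 * k - 1) * h * ‖σ (Y n ω)‖ ^ 2))
          ≤ a * ((1 + C * h) * (1 + ‖Z n ω‖ ^ 2)) := by gcongr
        _ = _ := by rw [ha, pow_succ]; field_simp

/-- The implicit-step solution operator. -/
def implG {d : ℕ} (O : Set (EuclideanSpace ℝ (Fin d)))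
    (b : EuclideanSpace ℝ (Fin d) → EuclideanSpace ℝ (Fin d)) (h : ℝ)
    (z : EuclideanSpace ℝ (Fin d)) : EuclideanSpace ℝ (Fin d) :=
  Function.invFunOn (fun x => x - h • b x) O z

/-- The scheme. -/
def eulerY {Ω : Type*} {d m : ℕ} (O : Set (EuclideanSpace ℝ (Fin d)))
    (b : EuclideanSpace ℝ (Fin d) → EuclideanSpace ℝ (Fin d))
    (σ : EuclideanSpace ℝ (Fin d) → Matrix (Fin d) (Fin m) ℝ)
    (ξ : Ω → EuclideanSpace ℝ (Fin d))
    (W : ℝ → Ω → EuclideanSpace ℝ (Fin m)) (h : ℝ) : ℕ → Ω → EuclideanSpace ℝ (Fin d)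
  | 0 => ξ
  | n + 1 => fun ω => implG O b h (eulerY O b σ ξ W h n ω
      + matMulVec (σ (eulerY O b σ ξ W h n ω)) (W ((n + 1 : ℕ) * h) ω - W (n * h) ω))

lemma expand_bound {d : ℕ} (O : Set (EuclideanSpace ℝ (Fin d)))
    (b : EuclideanSpace ℝ (Fin d) → EuclideanSpace ℝ (Fin d)) (c h : ℝ) (hh : 0 < h)
    (hmono : ∀ x ∈ O, ∀ y ∈ O, ⟪x - y, b x - b y⟫ ≤ c * ‖x - y‖ ^ 2)
    (x y : EuclideanSpace ℝ (Fin d)) (hx : x ∈ O) (hy : y ∈ O) :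
    (1 - h * c) * ‖x - y‖ ≤ ‖(x - h • b x) - (y - h • b y)‖ := by
  have e : (x - h • b x) - (y - h • b y) = (x - y) - h • (b x - b y) := by
    rw [smul_sub]; abel
  have h1 := real_inner_le_norm (x - y) ((x - h • b x) - (y - h • b y))
  have h2 : ⟪x - y, (x - h • b x) - (y - h • b y)⟫ = ‖x - y‖ ^ 2 - h * ⟪x - y, b x - b y⟫ := by
    rw [e, inner_sub_right, inner_smul_right, real_inner_self_eq_norm_sq]
  have h3 := mul_le_mul_of_nonneg_left (hmono x hx y hy) hh.le
  rcases (norm_nonneg (x - y)).eq_or_lt with h0 | h0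
  · rw [← h0, mul_zero]; exact norm_nonneg _
  · refine le_of_mul_le_mul_left ?_ h0
    rw [h2] at h1
    nlinarith

lemma growth_aux {d m : ℕ} (cbar ct p : ℝ) (hcbar : 0 ≤ cbar) (hct : 0 ≤ ct) (hp : 2 ≤ p)
    (O : Set (EuclideanSpace ℝ (Fin d)))
    (b : EuclideanSpace ℝ (Fin d) → EuclideanSpace ℝ (Fin d))
    (σ : EuclideanSpace ℝ (Fin d) → Matrix (Fin d) (Fin m) ℝ)
    (hσgrowth : ∀ x ∈ O, ‖σ x‖ ≤ ct * (1 + ‖x‖ ^ cbar))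
    (hcoerc : ∀ x ∈ O,
      ⟪x, b x⟫ + ((cbar + max 1 cbar) * p - 1) / 2 * ‖σ x‖ ^ 2 ≤ ct * (1 + ‖x‖ ^ 2))
    (k : ℕ) (hk : 2 * (k : ℝ) ≤ p + 2) :
    ∃ C1 : ℝ, 0 ≤ C1 ∧ ∀ x ∈ O,
      2 * ⟪x, b x⟫ + (2 * k - 1) * ‖σ x‖ ^ 2 ≤ C1 * (1 + ‖x‖ ^ 2) := by
  rcases le_or_gt cbar 1 with hc | hc
  · refine ⟨2 * ct + 2 * k * (8 * ct ^ 2), by positivity, fun x hx => ?_⟩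
    have h1 := hcoerc x hx
    have hq : 1 ≤ (cbar + max 1 cbar) * p := by
      have : 1 ≤ max 1 cbar := le_max_left _ _
      nlinarith
    have h2 : 0 ≤ ((cbar + max 1 cbar) * p - 1) / 2 * ‖σ x‖ ^ 2 :=
      mul_nonneg (by linarith) (by positivity)
    have hx0 := norm_nonneg x
    have h3 : ‖x‖ ^ cbar ≤ 1 + ‖x‖ := by
      rcases le_total ‖x‖ 1 with h | h
      · have := Real.rpow_le_one hx0 h hcbar
        linarith
      · have := Real.rpow_le_rpow_of_exponent_le h hc
        rw [Real.rpow_one] at this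
        linarith
    have h4 : ‖σ x‖ ≤ ct * (2 + ‖x‖) := (hσgrowth x hx).trans
      (mul_le_mul_of_nonneg_left (by linarith) hct)
    have h5 : ‖σ x‖ ^ 2 ≤ 8 * ct ^ 2 * (1 + ‖x‖ ^ 2) := by
      calc ‖σ x‖ ^ 2 ≤ (ct * (2 + ‖x‖)) ^ 2 := by gcongr
        _ = ct ^ 2 * (2 + ‖x‖) ^ 2 := by ring
        _ ≤ ct ^ 2 * (8 * (1 + ‖x‖ ^ 2)) := by
          gcongr; nlinarith [sq_nonneg (‖x‖ - 1), sq_nonneg (‖x‖ - 2)]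
        _ = _ := by ring
    have h6 : (2 * (k:ℝ) - 1) * ‖σ x‖ ^ 2 ≤ 2 * k * (8 * ct ^ 2 * (1 + ‖x‖ ^ 2)) :=
      calc (2 * (k:ℝ) - 1) * ‖σ x‖ ^ 2 ≤ 2 * k * ‖σ x‖ ^ 2 := by
            gcongr; linarith
        _ ≤ _ := by gcongr
    linarith
  · refine ⟨2 * ct, by positivity, fun x hx => ?_⟩
    have h1 := hcoerc x hx
    have hq : 2 * (k:ℝ) ≤ (cbar + max 1 cbar) * p := by
      have : 1 ≤ max 1 cbar := le_max_left _ _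
      nlinarith
    have : (2 * (k:ℝ) - 1) * ‖σ x‖ ^ 2 ≤ ((cbar + max 1 cbar) * p - 1) * ‖σ x‖ ^ 2 := by
      gcongr
    linarith

theorem uniform_moment_bounds_for_drift_implicit_Euler_approximations
    {Ω : Type*} [MeasurableSpace Ω] (P : Measure Ω) [IsProbabilityMeasure P]
    (d m : ℕ) (hd : 0 < d) (hm : 0 < m)
    (cdrift cbar ct T p : ℝ)
    (hcdrift : 0 ≤ cdrift) (hcbar : 0 ≤ cbar) (hct : 0 ≤ ct) (hT : 0 ≤ T) (hp : 2 ≤ p)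
    (O : Set (EuclideanSpace ℝ (Fin d))) (hO : MeasurableSet O)
    (b : EuclideanSpace ℝ (Fin d) → EuclideanSpace ℝ (Fin d)) (hbmeas : Measurable b)
    (σ : EuclideanSpace ℝ (Fin d) → Matrix (Fin d) (Fin m) ℝ)
    (hσmeas : ∀ i j, Measurable (fun x => σ x i j))
    (F : ℝ → MeasurableSpace Ω)
    (hF_mono : ∀ s u : ℝ, s ≤ u → F s ≤ F u)
    (hF_le : ∀ u : ℝ, F u ≤ (inferInstance : MeasurableSpace Ω))
    (W : ℝ → Ω → EuclideanSpace ℝ (Fin m))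
    (hW0 : ∀ ω, W 0 ω = 0)
    (hWadapt : ∀ u ∈ Set.Icc (0:ℝ) T, @Measurable Ω _ (F u) _ (W u))
    (hWcont : ∀ ω, ContinuousOn (fun u => W u ω) (Set.Icc 0 T))
    (hWlaw : ∀ s u : ℝ, 0 ≤ s → s ≤ u → u ≤ T → ∀ l : EuclideanSpace ℝ (Fin m),
      Measure.map (fun ω => ⟪l, W u ω - W s ω⟫) P
        = gaussianReal 0 (Real.toNNReal ((u - s) * ‖l‖ ^ 2)))
    (hWindep : ∀ s u : ℝ, 0 ≤ s → s ≤ u → u ≤ T →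
      Indep (MeasurableSpace.comap (fun ω => W u ω - W s ω) inferInstance) (F s) P)
    (ξ : Ω → EuclideanSpace ℝ (Fin d))
    (hξmeas : @Measurable Ω _ (F 0) _ ξ) (hξO : ∀ ω, ξ ω ∈ O)
    (hξmom : eLpNorm (fun ω => ‖ξ ω‖ + ‖b (ξ ω)‖)
      (ENNReal.ofReal ((cbar + max 1 cbar) * p)) P < ⊤)
    (hσgrowth : ∀ x ∈ O, ‖σ x‖ ≤ ct * (1 + ‖x‖ ^ cbar))
    (hmono : ∀ x ∈ O, ∀ y ∈ O, ⟪x - y, b x - b y⟫ ≤ cdrift * ‖x - y‖ ^ 2)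
    (hcoerc : ∀ x ∈ O,
      ⟪x, b x⟫ + ((cbar + max 1 cbar) * p - 1) / 2 * ‖σ x‖ ^ 2 ≤ ct * (1 + ‖x‖ ^ 2))
    (hsurj : ∀ s : ℝ, 0 < s → s * cdrift < 1 →
      Set.SurjOn (fun x => x - s • b x) O Set.univ) :
    ∃ Y : ℝ → ℕ → Ω → EuclideanSpace ℝ (Fin d),
      ImplicitEulerScheme d m T cdrift O b σ ξ W Y ∧
      (∀ Y' : ℝ → ℕ → Ω → EuclideanSpace ℝ (Fin d),
        ImplicitEulerScheme d m T cdrift O b σ ξ W Y' →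
        ∀ h : ℝ, h ∈ Set.Ioc (0:ℝ) T → h * cdrift < 1 →
          ∀ n : ℕ, (n : ℝ) ≤ T / h → ∀ ω, Y' h n ω = Y h n ω) ∧
      (⨆ h : ℝ, ⨆ _ : h ∈ Set.Ioc (0:ℝ) T, ⨆ _ : h * (4 * cdrift) ≤ 1,
          eLpNorm (fun ω => ⨆ n : ℕ, ⨆ _ : (n : ℝ) ≤ T / h, ‖Y h n ω‖)
            (ENNReal.ofReal p) P) < ⊤ := by
  classical
  obtain ⟨ω0⟩ : Nonempty Ω := by
    by_contra hne
    rw [not_nonempty_iff] at hne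
    have := measure_univ (μ := P)
    rw [Set.univ_eq_empty_iff.2 hne] at this
    simp at this
  -- the solution operator
  have hGO : ∀ h : ℝ, 0 < h → h * cdrift < 1 → ∀ z, implG O b h z ∈ O := fun h h0 h1 z =>
    Function.invFunOn_mem (hsurj h h0 h1 (Set.mem_univ z))
  have hGeq : ∀ h : ℝ, 0 < h → h * cdrift < 1 → ∀ z,
      implG O b h z - h • b (implG O b h z) = z := fun h h0 h1 z =>
    Function.invFunOn_eq (hsurj h h0 h1 (Set.mem_univ z))
  have hinj : ∀ h : ℝ, 0 < h → h * cdrift < 1 → ∀ x ∈ O, ∀ y ∈ O,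
      x - h • b x = y - h • b y → x = y := by
    intro h h0 h1 x hx y hy he
    have := expand_bound O b cdrift h h0 hmono x y hx hy
    rw [he, sub_self, norm_zero] at this
    have h2 : ‖x - y‖ ≤ 0 := by
      by_contra hcon
      push Not at hcon
      have := mul_pos (sub_pos.2 h1) hcon
      linarith
    exact sub_eq_zero.1 (norm_le_zero_iff.1 h2)
  have hGmeas : ∀ h : ℝ, 0 < h → h * cdrift < 1 → Measurable (implG O b h) := by
    intro h h0 h1
    have h2 : 0 < 1 - h * cdrift := sub_pos.2 h1
    have : LipschitzWith (Real.toNNReal (1 - h * cdrift)⁻¹) (implG O b h) := by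
      refine LipschitzWith.of_dist_le_mul fun z w => ?_
      have := expand_bound O b cdrift h h0 hmono _ _ (hGO h h0 h1 z) (hGO h h0 h1 w)
      rw [hGeq h h0 h1, hGeq h h0 h1] at this
      rw [Real.coe_toNNReal _ (by positivity), dist_eq_norm, dist_eq_norm, inv_mul_eq_div,
        le_div_iff₀ h2, mul_comm]
      exact this
    exact this.continuous.measurable
  have hYO : ∀ h : ℝ, 0 < h → h * cdrift < 1 → ∀ n ω, eulerY O b σ ξ W h n ω ∈ O := by
    intro h h0 h1 n ω
    cases n with
    | zero => exact hξO ω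
    | succ n => exact hGO h h0 h1 _
  have hYeq : ∀ h : ℝ, 0 < h → h * cdrift < 1 → ∀ n ω,
      eulerY O b σ ξ W h (n + 1) ω - h • b (eulerY O b σ ξ W h (n + 1) ω)
        = eulerY O b σ ξ W h n ω
          + matMulVec (σ (eulerY O b σ ξ W h n ω)) (W ((n + 1 : ℕ) * h) ω - W (n * h) ω) := by
    intro h h0 h1 n ω
    exact hGeq h h0 h1 _
  refine ⟨eulerY O b σ ξ W, ?_, ?_, ?_⟩
  · intro h hh hhc
    refine ⟨fun ω => rfl, fun n hn _ ω => ⟨hYO h hh.1 hhc n ω, ?_⟩⟩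
    obtain ⟨n, rfl⟩ : ∃ j, n = j + 1 := ⟨n - 1, by omega⟩
    have := hYeq h hh.1 hhc n ω
    rw [sub_eq_iff_eq_add] at this
    simp only [Nat.add_sub_cancel]
    conv_lhs => rw [this]
    abel
  · intro Y' hY' h hh hhc n
    obtain ⟨h0, hs⟩ := hY' h hh hhc
    induction n with
    | zero => intro _ ω; exact h0 ω
    | succ n ih =>
      intro hn ω
      have hn' : (n : ℝ) ≤ T / h := le_trans (by push_cast; linarith) hn
      obtain ⟨hm, he⟩ := hs (n + 1) (by omega) hn ω
      simp only [Nat.add_sub_cancel] at he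
      refine hinj h hh.1 hhc _ hm _ (hYO h hh.1 hhc (n + 1) ω) ?_
      rw [hYeq h hh.1 hhc n ω, ← ih hn' ω, sub_eq_iff_eq_add]
      refine he.trans ?_
      abel
  · -- the moment bound
    set k : ℕ := ⌊p / 2⌋₊ + 1 with hkdef
    have hk1 : 1 ≤ k := by omega
    have hp0 : 0 < p := by linarith
    have hkp : p < 2 * (k : ℝ) := by
      have := Nat.lt_floor_add_one (p / 2)
      rw [hkdef]; push_cast; linarith
    have hkp2 : 2 * (k : ℝ) ≤ p + 2 := by
      have := Nat.floor_le (by positivity : 0 ≤ p / 2)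
      rw [hkdef]; push_cast; linarith
    have hk0 : (0 : ℝ) < k := by exact_mod_cast hk1
    set θ : ℝ := p / (2 * k) with hθ
    have hθ0 : 0 < θ := by positivity
    have hθ1 : θ < 1 := by rw [hθ, div_lt_one (by positivity)]; exact hkp
    have hkθ : 2 * k * θ = p := by rw [hθ]; field_simp
    obtain ⟨C1, hC1, hC1b⟩ := growth_aux cbar ct p hcbar hct hp O b σ hσgrowth hcoerc k hkp2
    set x0 := ξ ω0 with hx0
    have hx0O : x0 ∈ O := hξO ω0
    set R : ℝ := ‖x0‖ + 2 * (‖x0‖ + T * ‖b x0‖) with hR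
    have hR0 : 0 ≤ R := by positivity
    set K : ℝ := 2 * R ^ 2 + 9 with hK
    have hK0 : 0 < K := by positivity
    have hKb : ∀ h : ℝ, h ∈ Set.Ioc (0:ℝ) T → h * (4 * cdrift) ≤ 1 → ∀ x ∈ O,
        1 + ‖x‖ ^ 2 ≤ K * (1 + ‖x - h • b x‖ ^ 2) := by
      intro h hh hc x hx
      have h1 := expand_bound O b cdrift h hh.1 hmono x x0 hx hx0O
      set z := x - h • b x
      have h2 : ‖z - (x0 - h • b x0)‖ ≤ ‖z‖ + (‖x0‖ + T * ‖b x0‖) := by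
        refine (norm_sub_le _ _).trans ?_
        gcongr
        refine (norm_sub_le _ _).trans ?_
        rw [norm_smul, Real.norm_of_nonneg hh.1.le]
        gcongr
        exact hh.2
      have h3 : ‖x‖ ≤ ‖x - x0‖ + ‖x0‖ := by
        simpa using norm_add_le (x - x0) x0
      have h4 : (1 / 2) * ‖x - x0‖ ≤ (1 - h * cdrift) * ‖x - x0‖ := by
        gcongr; linarith
      have h5 : ‖x‖ ≤ R + 2 * ‖z‖ := by rw [hR]; linarith
      have hz := norm_nonneg z
      calc 1 + ‖x‖ ^ 2 ≤ 1 + (R + 2 * ‖z‖) ^ 2 := by gcongr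
        _ ≤ K * (1 + ‖z‖ ^ 2) := by
          rw [hK]
          nlinarith [sq_nonneg (R - 2 * ‖z‖), mul_nonneg (sq_nonneg R) (sq_nonneg ‖z‖)]
    set C : ℝ := C1 * K with hC
    have hC0 : 0 ≤ C := by positivity
    set B : ℝ := (K * Real.exp (C * T)) ^ k with hB
    have hB0 : 0 < B := by positivity
    -- initial moment
    set I : ℝ≥0∞ := ∫⁻ ω, ‖(1 + T) * (1 + (‖ξ ω‖ + ‖b (ξ ω)‖))‖ₑ ^ p ∂P with hI
    have hξm : Measurable ξ := hξmeas.mono (hF_le 0) le_rfl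
    have hItop : I < ⊤ := by
      have hm1 : MemLp (fun ω => ‖ξ ω‖ + ‖b (ξ ω)‖) (ENNReal.ofReal ((cbar + max 1 cbar) * p)) P :=
        ⟨by fun_prop, hξmom⟩
      have hm2 : MemLp (fun ω => ‖ξ ω‖ + ‖b (ξ ω)‖) (ENNReal.ofReal p) P := by
        refine hm1.mono_exponent (ENNReal.ofReal_le_ofReal ?_)
        have : 1 ≤ max 1 cbar := le_max_left _ _
        nlinarith
      have hm3 : MemLp (fun ω => (1 + T) * (1 + (‖ξ ω‖ + ‖b (ξ ω)‖))) (ENNReal.ofReal p) P :=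
        ((memLp_const (1:ℝ)).add hm2).const_mul (1 + T)
      have := lintegral_rpow_enorm_lt_top_of_eLpNorm_lt_top
        (by simpa using hp0) ENNReal.ofReal_ne_top hm3.2
      rwa [ENNReal.toReal_ofReal hp0.le] at this
    refine lt_of_le_of_lt (b := (ENNReal.ofReal (B ^ θ) * (ENNReal.ofReal (1 / (1 - θ)) * I)) ^ (1 / p))
      ?_ ?_
    swap
    · refine ENNReal.rpow_lt_top_of_nonneg (by positivity) ?_
      exact ENNReal.mul_ne_top ENNReal.ofReal_ne_top
        (ENNReal.mul_ne_top ENNReal.ofReal_ne_top hItop.ne)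
    refine iSup_le fun h => iSup_le fun hh => iSup_le fun hhc4 => ?_
    have hhpos := hh.1
    have hhc : h * cdrift < 1 := by nlinarith
    set N : ℕ := ⌊T / h⌋₊ with hN
    have hNT : ∀ n : ℕ, n ≤ N → (n : ℝ) * h ≤ T := by
      intro n hn
      have : (n : ℝ) ≤ T / h := (Nat.le_floor_iff (by positivity)).1 hn
      rwa [le_div_iff₀ hhpos] at this
    set Y := eulerY O b σ ξ W h with hY
    set Z : ℕ → Ω → EuclideanSpace ℝ (Fin d) := fun n ω => Y n ω - h • b (Y n ω) with hZ
    set D : ℕ → Ω → EuclideanSpace ℝ (Fin m) :=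
      fun n ω => W ((n + 1 : ℕ) * h) ω - W (n * h) ω with hD
    have hFm : ∀ n : ℕ, F (n * h) ≤ F ((n + 1 : ℕ) * h) := fun n =>
      hF_mono _ _ (by push_cast; nlinarith)
    have hDm : ∀ n < N, Measurable[F ((n + 1 : ℕ) * h)] (D n) := by
      intro n hn
      have w1 := hWadapt ((n + 1 : ℕ) * h) ⟨by positivity, hNT _ hn⟩
      have w2 := (hWadapt (n * h) ⟨by positivity, hNT _ hn.le⟩).mono (hFm n) le_rfl
      exact w1.sub w2
    have hYm : ∀ n ≤ N, Measurable[F (n * h)] (Y n) := by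
      intro n
      induction n with
      | zero => intro _; rw [Nat.cast_zero, zero_mul]; exact hξmeas
      | succ n ih =>
        intro hn
        have y1 := (ih (by omega)).mono (hFm n) le_rfl
        have mm := @meas_matMulVec d m Ω (F ((n + 1 : ℕ) * h)) (fun ω => σ (Y n ω))
          (fun i j => (hσmeas i j).comp y1) (D n) (hDm n hn)
        exact (hGmeas h hhpos hhc).comp (y1.add mm)
    have hZm : ∀ n ≤ N, Measurable[F (n * h)] (Z n) := by
      intro n hn
      exact (hYm n hn).sub ((hbmeas.comp (hYm n hn)).const_smul h)
    have hstep : ∀ k : ℕ, ((k + 1 : ℕ) : ℝ) * h - k * h = h := by intro k; push_cast; ring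
    have main := fixed_h P (fun n => F (n * h)) (fun n => hF_le _) hFm N h hhpos.le D
      (fun n hn => (hDm n hn).mono (hF_le _) le_rfl)
      (fun n hn => hWindep (n * h) ((n + 1 : ℕ) * h) (by positivity)
        (by push_cast; nlinarith) (hNT _ hn))
      (fun n hn l => by
        have := hWlaw (n * h) ((n + 1 : ℕ) * h) (by positivity)
          (by push_cast; nlinarith) (hNT _ hn) l
        rwa [hstep] at this)
      σ hσmeas Y Z hYm hZm (fun n _ ω => hYeq h hhpos hhc n ω) k hk1 C hC0 ?_ θ hθ0 hθ1
    swap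
    · intro n _ ω
      set y := Y n ω with hy
      have hyO : y ∈ O := hYO h hhpos hhc n ω
      have a1 := hC1b y hyO
      have a2 := hKb h hh hhc4 y hyO
      have a3 : ‖Z n ω‖ ^ 2 = ‖y‖ ^ 2 - 2 * (h * ⟪y, b y⟫) + h ^ 2 * ‖b y‖ ^ 2 := by
        simp only [hZ]
        rw [norm_sub_sq_real, inner_smul_right, norm_smul, Real.norm_of_nonneg hhpos.le]
        ring
      have a4 : 0 ≤ h ^ 2 * ‖b y‖ ^ 2 := by positivity
      have a5 := mul_le_mul_of_nonneg_left a1 hhpos.le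
      have a6 := mul_le_mul_of_nonneg_left a2 (mul_nonneg hhpos.le hC1)
      have a7 : y - h • b y = Z n ω := rfl
      rw [a7] at a6
      rw [hC]
      linarith
    set S : ℕ → Ω → ℝ := fun n ω => (((1 + C * h) ^ n)⁻¹ * (1 + ‖Z n ω‖ ^ 2)) ^ k with hS
    have hD1 : 0 < (1 + C * h) := by positivity
    have hSpos : ∀ n ω, 0 < S n ω := fun n ω => by positivity
    have hrpos : ∀ ω, 0 < rmax S N ω := fun ω =>
      (hSpos 0 ω).trans_le (le_rmax S N 0 (Nat.zero_le _) ω)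
    -- pointwise bound
    have hpt : ∀ n : ℕ, (n : ℝ) ≤ T / h → ∀ ω, ‖Y n ω‖ ≤ ((B * rmax S N ω) ^ θ) ^ (1 / p) := by
      intro n hn ω
      have hnN : n ≤ N := Nat.le_floor hn
      have b1 : ‖Y n ω‖ ^ 2 ≤ K * (1 + ‖Z n ω‖ ^ 2) := by
        have := hKb h hh hhc4 (Y n ω) (hYO h hhpos hhc n ω)
        have a7 : Y n ω - h • b (Y n ω) = Z n ω := rfl
        rw [a7] at this
        linarith
      have b2 : (1 + C * h) ^ n ≤ Real.exp (C * T) := by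
        calc (1 + C * h) ^ n ≤ (Real.exp (C * h)) ^ n := by
              gcongr
              have := Real.add_one_le_exp (C * h)
              linarith
          _ = Real.exp (C * (n * h)) := by rw [← Real.exp_nat_mul]; congr 1; ring
          _ ≤ Real.exp (C * T) := by
              gcongr
              exact hNT n hnN
      have b3 : (‖Y n ω‖ ^ 2) ^ k ≤ B * rmax S N ω := by
        calc (‖Y n ω‖ ^ 2) ^ k ≤ (K * (1 + ‖Z n ω‖ ^ 2)) ^ k := by gcongr
          _ = (K * (1 + C * h) ^ n) ^ k * S n ω := by
              simp only [hS]; rw [← mul_pow]; congr 1; field_simp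
          _ ≤ (K * Real.exp (C * T)) ^ k * rmax S N ω := by
              gcongr
              exact le_rmax S N n hnN ω
      have b4 : ((‖Y n ω‖ ^ 2) ^ k) ^ θ ≤ (B * rmax S N ω) ^ θ := by gcongr
      have b5 : ((‖Y n ω‖ ^ 2) ^ k) ^ θ = ‖Y n ω‖ ^ p := by
        rw [← pow_mul, ← Real.rpow_natCast, ← Real.rpow_mul (norm_nonneg _)]
        congr 1
        push_cast; exact hkθ
      rw [b5] at b4
      calc ‖Y n ω‖ = (‖Y n ω‖ ^ p) ^ (1 / p) := by
            rw [← Real.rpow_mul (norm_nonneg _), mul_one_div_cancel hp0.ne', Real.rpow_one]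
        _ ≤ _ := by gcongr
    rw [eLpNorm_eq_lintegral_rpow_enorm_toReal (by simpa using hp0) ENNReal.ofReal_ne_top,
      ENNReal.toReal_ofReal hp0.le]
    refine ENNReal.rpow_le_rpow ?_ (by positivity)
    have hrm : Measurable (rmax S N) := by
      have : ∀ n ≤ N, Measurable (rmax S n) := by
        intro n
        induction n with
        | zero =>
          intro hn
          have := (hZm 0 hn).mono (hF_le _) le_rfl
          simp only [rmax, hS]
          fun_prop
        | succ n ih =>
          intro hn
          have := (hZm (n + 1) hn).mono (hF_le _) le_rfl
          refine (ih (by omega)).max ?_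
          simp only [hS]
          fun_prop
      exact this N le_rfl
    calc ∫⁻ ω, ‖⨆ n : ℕ, ⨆ _ : (n : ℝ) ≤ T / h, ‖Y n ω‖‖ₑ ^ p ∂P
        ≤ ∫⁻ ω, ENNReal.ofReal (B ^ θ) * ENNReal.ofReal (rmax S N ω ^ θ) ∂P := by
          refine lintegral_mono fun ω => ?_
          have hBr : 0 < B * rmax S N ω := mul_pos hB0 (hrpos ω)
          have c1 : 0 ≤ ⨆ n : ℕ, ⨆ _ : (n : ℝ) ≤ T / h, ‖Y n ω‖ :=
            Real.iSup_nonneg fun n => Real.iSup_nonneg fun _ => norm_nonneg _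
          have c2 : ⨆ n : ℕ, ⨆ _ : (n : ℝ) ≤ T / h, ‖Y n ω‖
              ≤ ((B * rmax S N ω) ^ θ) ^ (1 / p) :=
            Real.iSup_le (fun n => Real.iSup_le (fun hn => hpt n hn ω) (by positivity))
              (by positivity)
          rw [Real.enorm_eq_ofReal c1, ENNReal.ofReal_rpow_of_nonneg c1 hp0.le,
            ← ENNReal.ofReal_mul (by positivity), ← Real.mul_rpow hB0.le (hrpos ω).le]
          refine ENNReal.ofReal_le_ofReal ?_
          calc _ ≤ (((B * rmax S N ω) ^ θ) ^ (1 / p)) ^ p := by gcongr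
            _ = _ := by
              rw [← Real.rpow_mul (by positivity), one_div_mul_cancel hp0.ne', Real.rpow_one]
      _ = ENNReal.ofReal (B ^ θ) * ∫⁻ ω, ENNReal.ofReal (rmax S N ω ^ θ) ∂P := by
          rw [lintegral_const_mul _ (by fun_prop)]
      _ ≤ _ := by
          gcongr
          refine main.trans ?_
          gcongr
          rw [hI]
          refine lintegral_mono fun ω => ?_
          have d0 : 0 ≤ (1 + T) * (1 + (‖ξ ω‖ + ‖b (ξ ω)‖)) := by positivity
          rw [Real.enorm_eq_ofReal d0, ENNReal.ofReal_rpow_of_nonneg d0 hp0.le]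
          refine ENNReal.ofReal_le_ofReal ?_
          have d1 : ‖Z 0 ω‖ ≤ ‖ξ ω‖ + T * ‖b (ξ ω)‖ := by
            have : Z 0 ω = ξ ω - h • b (ξ ω) := rfl
            rw [this]
            refine (norm_sub_le _ _).trans ?_
            rw [norm_smul, Real.norm_of_nonneg hhpos.le]
            gcongr
            exact hh.2
          have d2 : 1 + ‖Z 0 ω‖ ^ 2 ≤ ((1 + T) * (1 + (‖ξ ω‖ + ‖b (ξ ω)‖))) ^ 2 := by
            have e0 := norm_nonneg (ξ ω)
            have e1 := norm_nonneg (b (ξ ω))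
            have e2 := norm_nonneg (Z 0 ω)
            have e3 : 1 + ‖Z 0 ω‖ ≤ (1 + T) * (1 + (‖ξ ω‖ + ‖b (ξ ω)‖)) := by
              nlinarith [mul_nonneg hT e0]
            calc 1 + ‖Z 0 ω‖ ^ 2 ≤ (1 + ‖Z 0 ω‖) ^ 2 := by nlinarith
              _ ≤ _ := by gcongr
          calc ((1 + ‖Z 0 ω‖ ^ 2) ^ k) ^ θ
              ≤ ((((1 + T) * (1 + (‖ξ ω‖ + ‖b (ξ ω)‖))) ^ 2) ^ k) ^ θ := by gcongr
            _ = _ := by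
              rw [← pow_mul, ← Real.rpow_natCast, ← Real.rpow_mul d0]
              congr 1
              push_cast; exact hkθ

end
end

section
/- Let T, L, c ∈ [0,∞), ε ∈ (0,∞), γ ∈ (0,1], let μ : [0,∞) → ℝ be Borel measurable, let n ∈ ℕ₀ and θ = (t₀,…,t_n) ∈ [0,T]^{n+1} satisfy 0 = t₀ < t₁ < … < t_n = T and L|θ| < 1 (|θ| := max_k (t_k−t_{k−1})), assume (x−y)(μ(x)−μ(y)) ≤ L(x−y)² and |μ(x)−μ(y)| ≤ c|x−y|(1/x + 1/y + 1/(xy) + x^c + y^c) for all x, y ∈ (0,∞). Let (Ω, 𝓕, ℙ, (𝓕_t)_{t∈[0,T]}) be a filtered probability space whose filtration satisfies the usual conditions, let W : [0,T]×Ω → ℝ be a standard (𝓕_t)-Brownian motion, let X : [0,T]×Ω → [0,∞) be an (𝓕_t)-adapted stochastic process with continuous sample paths such that ℙ-a.s. ∫_0^T |μ(X_s)| ds < ∞, such that sup_{s∈[0,T]} ℙ[X_s = 0] = 0, and such that for every t ∈ [0,T] it holds ℙ-a.s. that X_t = X_0 + ∫_0^t μ(X_s) ds + W_t, and let Y : {t₀,…,t_n}×Ω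 → [0,∞) be measurable with Y₀ = X₀ and Y_{t_{k+1}} = Y_{t_k} + μ(Y_{t_{k+1}})(t_{k+1}−t_k) + (W_{t_{k+1}} − W_{t_k}) ℙ-a.s. for all k ∈ {0,…,n−1}. Then ‖ sup_{k∈{0,…,n}} |X_{t_k} − Y_{t_k}| ‖_{L^1(Ω;ℝ)} ≤ 2Tc·(1/(1−|θ|L))^n · ( ‖ sup_{u∈[0,T]} |X_u − X_{⌈u⌉_θ}| ‖_{L^{γ(1+1/ε)}(Ω;ℝ)} )^γ · sup_{u∈[0,T]} [ ‖ 2/(X_u)^{1+γ} ‖_{L^{1+ε}(Ω;ℝ)} + (γ/(1+γ))·‖ (X_u)^{1/γ−γ} ‖_{L^{1+ε}(Ω;ℝ)} + 2‖ (X_u)^{c+1−γ} ‖_{L^{1+ε}(Ω;ℝ)} + 1/(1+γ) ]. -/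
open MeasureTheory ProbabilityTheory Filter Set
open scoped ENNReal NNReal

noncomputable section

/-- The smallest grid point of the grid `t 0 < t 1 < ... < t n` which is `≥ s`. -/
def gridCeil (n : ℕ) (t : ℕ → ℝ) (s : ℝ) : ℝ :=
  sInf {x | (∃ i ≤ n, x = t i) ∧ s ≤ x}

/-- The mesh size `|θ| = max_k (t_k - t_{k-1})` of the grid `t 0 < t 1 < ... < t n`. -/
def gridMesh (n : ℕ) (t : ℕ → ℝ) : ℝ := ⨆ i : Fin n, (t (i.1 + 1) - t i.1)

noncomputable def fB (c γ x : ℝ) : ℝ := 2 * (x ^ (1+γ))⁻¹ + γ / (1+γ) * x ^ (1/γ - γ) + 2 * x ^ (c+1-γ) + 1/(1+γ)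

theorem fB_aux (c γ : ℝ) (hc : 0 ≤ c) (hγ1 : 0 < γ) (hγ2 : γ ≤ 1) (x y : ℝ) (hx : 0 < x) (hxy : x ≤ y) :
    (y - x) ^ (1-γ) * (1 / x + 1 / y + 1 / (x * y) + x ^ c + y ^ c) ≤ fB c γ x + fB c γ y := by
  have hy : 0 < y := hx.trans_le hxy
  have hg : 0 < 1 + γ := by linarith
  have h1 : (y - x) ^ (1-γ) ≤ y ^ (1-γ) :=
    Real.rpow_le_rpow (by linarith) (by linarith) (by linarith)
  have hconj : (1+γ).HolderConjugate ((1+γ)/γ) := by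
    rw [Real.holderConjugate_iff]
    refine ⟨by linarith, ?_⟩
    field_simp
  have hxx : (x ^ (1+γ))⁻¹ = (x⁻¹) ^ (1+γ) := (Real.inv_rpow hx.le _).symm
  have hyy : (y ^ (1+γ))⁻¹ = (y⁻¹) ^ (1+γ) := (Real.inv_rpow hy.le _).symm
  have hle : (y⁻¹) ^ (1+γ) ≤ (x⁻¹) ^ (1+γ) :=
    Real.rpow_le_rpow (by positivity) (by gcongr) hg.le
  -- young 1
  have y1 : x⁻¹ * y ^ (1-γ) ≤ (x⁻¹) ^ (1+γ) / (1+γ) + γ/(1+γ) * y ^ (1/γ - γ) := by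
    have := Real.young_inequality_of_nonneg (a := x⁻¹) (b := y ^ (1-γ)) (by positivity) (by positivity) hconj
    rw [← Real.rpow_mul hy.le] at this
    have e : (1-γ) * ((1+γ)/γ) = 1/γ - γ := by field_simp; ring
    rw [e] at this
    have e2 : y ^ (1/γ - γ) / ((1+γ)/γ) = γ/(1+γ) * y ^ (1/γ - γ) := by field_simp
    linarith
  have y2 : y ^ (1-γ) * y⁻¹ ≤ 1/(1+γ) + γ/(1+γ) * (y⁻¹) ^ (1+γ) := by
    have := Real.young_inequality_of_nonneg (a := 1) (b := (y⁻¹) ^ γ) (by positivity) (by positivity) hconj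
    rw [← Real.rpow_mul (by positivity), Real.one_rpow] at this
    have e : γ * ((1+γ)/γ) = 1+γ := by field_simp
    rw [e] at this
    have e2 : (y⁻¹) ^ (1+γ) / ((1+γ)/γ) = γ/(1+γ) * (y⁻¹) ^ (1+γ) := by field_simp
    have e3 : y ^ (1-γ) * y⁻¹ = (y⁻¹) ^ γ := by
      rw [Real.inv_rpow hy.le, ← Real.rpow_neg hy.le, ← Real.rpow_neg_one y, ← Real.rpow_add hy]
      congr 1; ring
    rw [e3]; linarith
  have y3 : y ^ (1-γ) * (x * y)⁻¹ ≤ (x⁻¹) ^ (1+γ) := by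
    have e3 : y ^ (1-γ) * y⁻¹ = (y⁻¹) ^ γ := by
      rw [Real.inv_rpow hy.le, ← Real.rpow_neg hy.le, ← Real.rpow_neg_one y, ← Real.rpow_add hy]
      congr 1; ring
    have : (y⁻¹) ^ γ ≤ (x⁻¹) ^ γ := Real.rpow_le_rpow (by positivity) (by gcongr) hγ1.le
    calc y ^ (1-γ) * (x * y)⁻¹ = (y ^ (1-γ) * y⁻¹) * x⁻¹ := by rw [mul_inv]; ring
      _ ≤ (x⁻¹) ^ γ * x⁻¹ := by rw [e3]; gcongr
      _ = _ := by rw [add_comm, Real.rpow_add (by positivity), Real.rpow_one]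
  have y4 : y ^ (1-γ) * y ^ c = y ^ (c+1-γ) := by
    rw [← Real.rpow_add hy]; congr 1; ring
  have y5 : y ^ (1-γ) * x ^ c ≤ y ^ (c+1-γ) := by
    rw [← y4]; gcongr
  have hpos : 0 ≤ 1 / x + 1 / y + 1 / (x * y) + x ^ c + y ^ c := by positivity
  have h2 := mul_le_mul_of_nonneg_right h1 hpos
  refine h2.trans ?_
  unfold fB
  rw [hxx, hyy]
  have p1 : 0 ≤ γ / (1+γ) * x ^ (1/γ - γ) := by positivity
  have p2 : 0 ≤ x ^ (c+1-γ) := by positivity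
  have p3 : 0 ≤ (y⁻¹) ^ (1+γ) := by positivity
  have p4 : 0 ≤ (x⁻¹) ^ (1+γ) := by positivity
  have p5 : (x⁻¹) ^ (1+γ) / (1+γ) ≤ (x⁻¹) ^ (1+γ) := div_le_self p4 (by linarith)
  have p6 : γ/(1+γ) * (y⁻¹) ^ (1+γ) ≤ (y⁻¹) ^ (1+γ) := by
    apply mul_le_of_le_one_left p3
    rw [div_le_one hg]; linarith
  have p7 : 0 < 1/(1+γ) := by positivity
  simp only [one_div, mul_add] at *
  linarith

theorem fB_aux' (c γ : ℝ) (hc : 0 ≤ c) (hγ1 : 0 < γ) (hγ2 : γ ≤ 1) (x y : ℝ) (hx : 0 < x) (hy : 0 < y) :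
    |x - y| * (1 / x + 1 / y + 1 / (x * y) + x ^ c + y ^ c) ≤ |x - y| ^ γ * (fB c γ x + fB c γ y) := by
  have key : |x-y| ^ (1-γ) * (1 / x + 1 / y + 1 / (x * y) + x ^ c + y ^ c) ≤ fB c γ x + fB c γ y := by
    rcases le_total x y with h | h
    · rw [abs_sub_comm, abs_of_nonneg (sub_nonneg.2 h)]
      exact fB_aux c γ hc hγ1 hγ2 x y hx h
    · rw [abs_of_nonneg (sub_nonneg.2 h)]
      have := fB_aux c γ hc hγ1 hγ2 y x hy h
      rw [mul_comm x y]
      linarith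
  have e : |x-y| = |x-y| ^ γ * |x-y| ^ (1-γ) := by
    rw [← Real.rpow_add' (abs_nonneg _) (by norm_num)]
    simp
  calc _ = |x - y| ^ γ * (|x-y| ^ (1-γ) * (1 / x + 1 / y + 1 / (x * y) + x ^ c + y ^ c)) := by
        rw [← mul_assoc, ← e]
    _ ≤ _ := by gcongr

theorem rec_aux (n : ℕ) (e R : ℕ → ℝ) (a : ℝ) (ha : 0 < a) (ha1 : a ≤ 1) (hR : ∀ k, 0 ≤ R k)
    (he0 : e 0 = 0) (he : ∀ k < n, a * |e (k+1)| ≤ |e k| + R k) :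
    ∀ k ≤ n, |e k| ≤ (1 / a) ^ n * ∑ j ∈ Finset.range n, R j := by
  have h1 : 1 ≤ 1 / a := by rw [le_div_iff₀ ha]; linarith
  have : ∀ k ≤ n, |e k| ≤ (1 / a) ^ k * ∑ j ∈ Finset.range k, R j := by
    intro k
    induction k with
    | zero => intro _; simp [he0]
    | succ k ih =>
      intro hk
      have h := he k (by omega)
      have ih := ih (by omega)
      have h2 : |e (k+1)| ≤ (1/a) * (|e k| + R k) := by
        rw [one_div, inv_mul_eq_div, le_div_iff₀ ha]; linarith
      refine h2.trans ?_
      rw [Finset.sum_range_succ, pow_succ', mul_assoc]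
      gcongr
      rw [mul_add]
      have : R k ≤ (1/a)^k * R k := le_mul_of_one_le_left (hR k) (one_le_pow₀ h1)
      linarith
  intro k hk
  refine (this k hk).trans ?_
  gcongr
  · exact Finset.sum_nonneg fun _ _ => hR _
  · intro i _ _; exact hR i


theorem Y_step {Ω : Type*} (Fs Ft : MeasurableSpace Ω) [m0 : MeasurableSpace Ω]
    (P : Measure Ω) [IsProbabilityMeasure P] (hst : Fs ≤ Ft) (hs : Fs ≤ m0) (ht : Ft ≤ m0)
    (μ : ℝ → ℝ) (hμmeas : Measurable μ) (D : Ω → ℝ) (hD : @Measurable Ω ℝ Ft _ D)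
    (L h : ℝ) (hh : 0 < h) (hLh : L * h < 1)
    (hlaw : Measure.map D P = gaussianReal 0 (Real.toNNReal h))
    (hindep : Indep (MeasurableSpace.comap D inferInstance) Fs P)
    (hμosl : ∀ x y : ℝ, 0 < x → 0 < y → (x - y) * (μ x - μ y) ≤ L * (x - y) ^ 2)
    (y y' : Ω → ℝ) (hy'0 : ∀ ω, 0 ≤ y' ω) (Z : Ω → ℝ) (hZ : @Measurable Ω ℝ Fs _ Z) (hyZ : y =ᵐ[P] Z)
    (hrec : ∀ᵐ ω ∂P, y' ω = y ω + μ (y' ω) * h + D ω) :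
    (∃ Z' : Ω → ℝ, @Measurable Ω ℝ Ft _ Z' ∧ y' =ᵐ[P] Z') ∧ ∀ᵐ ω ∂P, 0 < y' ω := by
  have hDm : Measurable D := hD.mono ht le_rfl
  have hZm : Measurable Z := hZ.mono hs le_rfl
  have hind : IndepFun Z D P := by
    rw [IndepFun_iff_Indep]
    refine indep_of_indep_of_le_left hindep.symm ?_
    exact hZ.comap_le
  have hprod := (indepFun_iff_map_prod_eq_prod_map_map hZm.aemeasurable hDm.aemeasurable).1 hind
  have hnull : ∀ a : ℝ, P {ω | Z ω + D ω = a} = 0 := by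
    intro a
    have hS : MeasurableSet {p : ℝ × ℝ | p.1 + p.2 = a} :=
      measurableSet_eq_fun (by fun_prop) (by fun_prop)
    have e : {ω | Z ω + D ω = a} = (fun ω => (Z ω, D ω)) ⁻¹' {p : ℝ × ℝ | p.1 + p.2 = a} := rfl
    rw [e, ← Measure.map_apply (hZm.prodMk hDm) hS, hprod]
    have : IsProbabilityMeasure (Measure.map D P) := Measure.isProbabilityMeasure_map hDm.aemeasurable
    rw [Measure.measure_prod_null hS]
    refine Filter.Eventually.of_forall fun z => ?_
    have e2 : Prod.mk z ⁻¹' {p : ℝ × ℝ | p.1 + p.2 = a} = {a - z} := by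
      ext w; simp only [Set.mem_preimage, Set.mem_ofPred_eq, Set.mem_singleton_iff]
      constructor <;> intro h <;> linarith
    change (Measure.map D P) (Prod.mk z ⁻¹' {p : ℝ × ℝ | p.1 + p.2 = a}) = 0
    rw [e2, hlaw]
    have : NullSingletonClass (gaussianReal 0 (Real.toNNReal h)) :=
      nullSingletonClass_gaussianReal (by simpa using hh)
    simp
  have hpos : ∀ᵐ ω ∂P, 0 < y' ω := by
    have h1 : ∀ᵐ ω ∂P, ¬ (Z ω + D ω = - (μ 0 * h)) := by
      rw [ae_iff]; simpa using hnull _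
    filter_upwards [h1, hrec, hyZ] with ω h1 h2 h3
    refine lt_of_le_of_ne (hy'0 ω) fun h0 => h1 ?_
    rw [← h0] at h2
    linarith
  refine ⟨?_, hpos⟩
  let g : Set.Ioi (0:ℝ) → ℝ := fun x => x.1 - μ x.1 * h
  have hg : Measurable g := by fun_prop
  have hginj : Function.Injective g := by
    intro a b hab
    by_contra hne
    have hne' : a.1 - b.1 ≠ 0 := fun h => hne (Subtype.ext (by linarith))
    have h1 := hμosl a.1 b.1 a.2 b.2
    have h2 : a.1 - b.1 = (μ a.1 - μ b.1) * h := by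
      simp only [g] at hab; linarith
    have h3 : 0 < (a.1 - b.1)^2 := by positivity
    have h4 := mul_le_mul_of_nonneg_right h1 hh.le
    rw [mul_assoc, ← h2] at h4
    nlinarith
  have : StandardBorelSpace (Set.Ioi (0:ℝ)) := measurableSet_Ioi.standardBorel
  have hemb := hg.measurableEmbedding hginj
  obtain ⟨G, hG, hGg⟩ := hemb.exists_measurable_extend (g := Subtype.val) measurable_subtype_coe (fun _ => ⟨0⟩)
  refine ⟨fun ω => G (Z ω + D ω), ?_, ?_⟩
  · exact hG.comp ((hZ.mono hst le_rfl).add hD)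
  · filter_upwards [hpos, hrec, hyZ] with ω h1 h2 h3
    have := congrFun hGg ⟨y' ω, h1⟩
    simp only [Function.comp, g] at this
    rw [← this]; congr 1; linarith

theorem L1_aux {Ω : Type*} [m0 : MeasurableSpace Ω] (P : Measure Ω) [IsProbabilityMeasure P]
    (μ : ℝ → ℝ) (x y D : Ω → ℝ) (hx : Measurable x) (hy : Measurable y)
    (hx0 : ∀ᵐ ω ∂P, 0 < x ω) (hy0 : ∀ᵐ ω ∂P, 0 < y ω) (hD : ∀ ω, |x ω - y ω| ≤ D ω)
    (c ε γ : ℝ) (hc : 0 ≤ c) (hε : 0 < ε) (hγ1 : 0 < γ) (hγ2 : γ ≤ 1)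
    (hμlip : ∀ x y : ℝ, 0 < x → 0 < y →
      |μ x - μ y| ≤ c * |x - y| * (1 / x + 1 / y + 1 / (x * y) + x ^ c + y ^ c))
    (S : ℝ≥0∞) (hS : ∀ z : Ω → ℝ, z = x ∨ z = y → 
      ((∫⁻ ω, ((2 : ℝ≥0∞) * ((ENNReal.ofReal (z ω)) ^ (1 + γ))⁻¹) ^ (1 + ε) ∂P)
                  ^ (1 / (1 + ε))
              + ENNReal.ofReal (γ / (1 + γ)) *
                  eLpNorm (fun ω => (z ω) ^ (1 / γ - γ)) (ENNReal.ofReal (1 + ε)) P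
              + 2 * eLpNorm (fun ω => (z ω) ^ (c + 1 - γ)) (ENNReal.ofReal (1 + ε)) P
              + ENNReal.ofReal (1 / (1 + γ))) ≤ S) :
    ∫⁻ ω, ‖μ (x ω) - μ (y ω)‖ₑ ∂P ≤ ENNReal.ofReal c * 
      (eLpNorm D (ENNReal.ofReal (γ * (1 + 1 / ε))) P) ^ γ * (2 * S) := by
  have hp1 : 1 ≤ 1 + ε := by linarith
  have hp0 : 0 < 1 + ε := by linarith
  let φ : (Ω → ℝ) → Ω → ℝ≥0∞ := fun z ω => ENNReal.ofReal (fB c γ (z ω))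
  have hfB : Measurable (fB c γ) := by unfold fB; fun_prop
  have hφm : ∀ z : Ω → ℝ, Measurable z → Measurable (φ z) := fun z hz => (hfB.comp hz).ennreal_ofReal
  have hφ : ∀ z : Ω → ℝ, Measurable z → (∀ᵐ ω ∂P, 0 < z ω) → z = x ∨ z = y → 
      (∫⁻ ω, φ z ω ^ (1+ε) ∂P) ^ (1/(1+ε)) ≤ S := by
    intro z hz hz0 hzz
    refine le_trans ?_ (hS z hzz)
    let f1 : Ω → ℝ≥0∞ := fun ω => 2 * ((ENNReal.ofReal (z ω)) ^ (1 + γ))⁻¹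
    let f2 : Ω → ℝ≥0∞ := fun ω => ENNReal.ofReal (γ / (1 + γ)) * ‖(z ω) ^ (1 / γ - γ)‖ₑ
    let f3 : Ω → ℝ≥0∞ := fun ω => 2 * ‖(z ω) ^ (c + 1 - γ)‖ₑ
    let f4 : Ω → ℝ≥0∞ := fun ω => ENNReal.ofReal (1 / (1 + γ))
    have m1 : Measurable f1 := by fun_prop
    have m2 : Measurable f2 := by fun_prop
    have m3 : Measurable f3 := by fun_prop
    have m4 : Measurable f4 := by fun_prop
    have e0 : (∫⁻ ω, φ z ω ^ (1+ε) ∂P) = ∫⁻ ω, (f1 + f2 + f3 + f4) ω ^ (1+ε) ∂P := by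
      refine lintegral_congr_ae ?_
      filter_upwards [hz0] with ω hω
      congr 1
      simp only [φ, fB, f1, f2, f3, f4, Pi.add_apply]
      rw [ENNReal.ofReal_add (by positivity) (by positivity),
        ENNReal.ofReal_add (by positivity) (by positivity),
        ENNReal.ofReal_add (by positivity) (by positivity)]
      rw [ENNReal.ofReal_mul (by positivity), ENNReal.ofReal_mul (by positivity),
        ENNReal.ofReal_mul (by positivity), ENNReal.ofReal_inv_of_pos (by positivity),
        ENNReal.ofReal_rpow_of_pos hω, Real.enorm_of_nonneg (by positivity),
        Real.enorm_of_nonneg (by positivity)]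
      simp
    have cm : ∀ (a : ℝ≥0∞) (ha : a ≠ ⊤) (g : Ω → ℝ), 
        (∫⁻ ω, (a * ‖g ω‖ₑ) ^ (1+ε) ∂P) ^ (1/(1+ε)) = a * eLpNorm g (ENNReal.ofReal (1 + ε)) P := by
      intro a ha g
      rw [eLpNorm_eq_lintegral_rpow_enorm_toReal (by simpa using hp0) ENNReal.ofReal_ne_top,
        ENNReal.toReal_ofReal hp0.le]
      simp_rw [ENNReal.mul_rpow_of_nonneg _ _ hp0.le]
      rw [lintegral_const_mul' _ _ (by finiteness), ENNReal.mul_rpow_of_nonneg _ _ (by positivity),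
        ← ENNReal.rpow_mul, mul_one_div_cancel hp0.ne', ENNReal.rpow_one]
    have c4 : (∫⁻ ω, f4 ω ^ (1+ε) ∂P) ^ (1/(1+ε)) = ENNReal.ofReal (1 / (1 + γ)) := by
      simp only [f4, lintegral_const, measure_univ, mul_one]
      rw [← ENNReal.rpow_mul, mul_one_div_cancel hp0.ne', ENNReal.rpow_one]
    rw [e0]
    refine (ENNReal.lintegral_Lp_add_le ((m1.add m2).add m3).aemeasurable m4.aemeasurable hp1).trans ?_
    rw [c4]
    gcongr
    refine (ENNReal.lintegral_Lp_add_le (m1.add m2).aemeasurable m3.aemeasurable hp1).trans ?_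
    rw [← cm 2 (by simp)]
    gcongr
    refine (ENNReal.lintegral_Lp_add_le m1.aemeasurable m2.aemeasurable hp1).trans ?_
    rw [← cm _ (by simp)]
  let a : Ω → ℝ≥0∞ := fun ω => ‖x ω - y ω‖ₑ ^ γ
  have ham : Measurable a := by fun_prop
  have hconj : (1 + 1/ε).HolderConjugate (1+ε) := by
    rw [Real.holderConjugate_iff]
    refine ⟨by have : 0 < 1/ε := by positivity
               linarith, by field_simp; ring⟩
  have hq : 0 < 1 + 1/ε := by positivity
  have hne : ENNReal.ofReal c ≠ ⊤ := ENNReal.ofReal_ne_top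
  calc ∫⁻ ω, ‖μ (x ω) - μ (y ω)‖ₑ ∂P ≤ ∫⁻ ω, ENNReal.ofReal c * (a * (φ x + φ y)) ω ∂P := by
        refine lintegral_mono_ae ?_
        filter_upwards [hx0, hy0] with ω h1 h2
        have h3 : |μ (x ω) - μ (y ω)| ≤ c * (|x ω - y ω| ^ γ * (fB c γ (x ω) + fB c γ (y ω))) := by
          refine (hμlip _ _ h1 h2).trans ?_
          rw [mul_assoc]
          exact mul_le_mul_of_nonneg_left (fB_aux' c γ hc hγ1 hγ2 _ _ h1 h2) hc
        have h4 : 0 ≤ fB c γ (x ω) := by unfold fB; positivity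
        have h5 : 0 ≤ fB c γ (y ω) := by unfold fB; positivity
        rw [Real.enorm_eq_ofReal_abs]
        refine (ENNReal.ofReal_le_ofReal h3).trans_eq ?_
        simp only [Pi.mul_apply, Pi.add_apply, a, φ]
        rw [ENNReal.ofReal_mul hc, ENNReal.ofReal_mul (by positivity), ENNReal.ofReal_add h4 h5,
          Real.enorm_eq_ofReal_abs, ENNReal.ofReal_rpow_of_nonneg (abs_nonneg _) hγ1.le]
    _ = ENNReal.ofReal c * ∫⁻ ω, (a * (φ x + φ y)) ω ∂P := lintegral_const_mul' _ _ hne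
    _ ≤ ENNReal.ofReal c * ((∫⁻ ω, a ω ^ (1 + 1/ε) ∂P) ^ (1/(1+1/ε)) * 
          (∫⁻ ω, (φ x + φ y) ω ^ (1 + ε) ∂P) ^ (1/(1+ε))) := by
        gcongr
        exact ENNReal.lintegral_mul_le_Lp_mul_Lq P hconj ham.aemeasurable
          ((hφm x hx).add (hφm y hy)).aemeasurable
    _ ≤ ENNReal.ofReal c * ((eLpNorm D (ENNReal.ofReal (γ * (1 + 1 / ε))) P) ^ γ * (2 * S)) := by
        gcongr
        · rw [eLpNorm_eq_lintegral_rpow_enorm_toReal (by simp; positivity) ENNReal.ofReal_ne_top,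
            ENNReal.toReal_ofReal (by positivity), ← ENNReal.rpow_mul]
          have e : 1 / (γ * (1 + 1/ε)) * γ = 1/(1+1/ε) := by field_simp
          rw [e]
          gcongr with ω
          simp only [a]
          rw [← ENNReal.rpow_mul]
          gcongr
          rw [Real.enorm_eq_ofReal_abs, Real.enorm_eq_ofReal_abs]
          exact ENNReal.ofReal_le_ofReal ((hD ω).trans (le_abs_self _))
        · refine (ENNReal.lintegral_Lp_add_le (hφm x hx).aemeasurable (hφm y hy).aemeasurable hp1).trans ?_
          rw [two_mul]
          exact add_le_add (hφ x hx hx0 (Or.inl rfl)) (hφ y hy hy0 (Or.inr rfl))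
    _ = _ := by ring


theorem strong_L1_error_bound_for_drift_implicit_Euler_Bessel_type
    {Ω : Type*} [MeasurableSpace Ω] (P : Measure Ω) [IsProbabilityMeasure P]
    (T : ℝ) (hT : 0 ≤ T)
    (F : ℝ → MeasurableSpace Ω)
    (hF_mono : ∀ s t : ℝ, s ≤ t → F s ≤ F t)
    (hF_le : ∀ t : ℝ, F t ≤ (inferInstance : MeasurableSpace Ω))
    (μ : ℝ → ℝ) (hμmeas : Measurable μ)
    (W X : ℝ → Ω → ℝ)
    (hW0 : ∀ ω, W 0 ω = 0)
    (hWadapt : ∀ t ∈ Set.Icc (0:ℝ) T, @Measurable Ω ℝ (F t) _ (W t))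
    (hWcont : ∀ ω, ContinuousOn (fun t => W t ω) (Set.Icc 0 T))
    (hWlaw : ∀ s t : ℝ, 0 ≤ s → s ≤ t → t ≤ T →
      Measure.map (fun ω => W t ω - W s ω) P = gaussianReal 0 (Real.toNNReal (t - s)))
    (hWindep : ∀ s t : ℝ, 0 ≤ s → s ≤ t → t ≤ T →
      Indep (MeasurableSpace.comap (fun ω => W t ω - W s ω) inferInstance) (F s) P)
    (hXnonneg : ∀ t ω, 0 ≤ X t ω)
    (hXadapt : ∀ t ∈ Set.Icc (0:ℝ) T, @Measurable Ω ℝ (F t) _ (X t))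
    (hXcont : ∀ ω, ContinuousOn (fun t => X t ω) (Set.Icc 0 T))
    (hXint : ∀ᵐ ω ∂P, IntervalIntegrable (fun s => |μ (X s ω)|) volume 0 T)
    (hSDE : ∀ t ∈ Set.Icc (0:ℝ) T, ∀ᵐ ω ∂P,
      X t ω = X 0 ω + (∫ s in (0:ℝ)..t, μ (X s ω)) + W t ω)
    (L c ε γ : ℝ) (hL : 0 ≤ L) (hc : 0 ≤ c) (hε : 0 < ε) (hγ1 : 0 < γ) (hγ2 : γ ≤ 1)
    (n : ℕ) (t : ℕ → ℝ)
    (ht0 : t 0 = 0) (htn : t n = T) (htmono : ∀ i < n, t i < t (i + 1))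
    (htmem : ∀ i ≤ n, t i ∈ Set.Icc (0:ℝ) T)
    (hmesh : L * gridMesh n t < 1)
    (hμosl : ∀ x y : ℝ, 0 < x → 0 < y → (x - y) * (μ x - μ y) ≤ L * (x - y) ^ 2)
    (hμlip : ∀ x y : ℝ, 0 < x → 0 < y →
      |μ x - μ y| ≤ c * |x - y| * (1 / x + 1 / y + 1 / (x * y) + x ^ c + y ^ c))
    (hXzero : ∀ s ∈ Set.Icc (0:ℝ) T, P {ω | X s ω = 0} = 0)
    (Y : ℕ → Ω → ℝ)
    (hYmeas : ∀ k ≤ n, Measurable (Y k))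
    (hYnonneg : ∀ k ≤ n, ∀ ω, 0 ≤ Y k ω)
    (hY0 : ∀ ω, Y 0 ω = X 0 ω)
    (hYrec : ∀ k < n, ∀ᵐ ω ∂P,
      Y (k + 1) ω = Y k ω + μ (Y (k + 1) ω) * (t (k + 1) - t k)
        + (W (t (k + 1)) ω - W (t k) ω)) :
    eLpNorm (fun ω => ⨆ k : Fin (n + 1), |X (t k.1) ω - Y k.1 ω|) 1 P
      ≤ ENNReal.ofReal (2 * T * c * (1 / (1 - gridMesh n t * L)) ^ n)
        * (eLpNorm (fun ω => ⨆ u : Set.Icc (0:ℝ) T, |X u.1 ω - X (gridCeil n t u.1) ω|)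
            (ENNReal.ofReal (γ * (1 + 1 / ε))) P) ^ γ
        * ⨆ u ∈ Set.Icc (0:ℝ) T,
            ((∫⁻ ω, ((2 : ℝ≥0∞) * ((ENNReal.ofReal (X u ω)) ^ (1 + γ))⁻¹) ^ (1 + ε) ∂P)
                  ^ (1 / (1 + ε))
              + ENNReal.ofReal (γ / (1 + γ)) *
                  eLpNorm (fun ω => (X u ω) ^ (1 / γ - γ)) (ENNReal.ofReal (1 + ε)) P
              + 2 * eLpNorm (fun ω => (X u ω) ^ (c + 1 - γ)) (ENNReal.ofReal (1 + ε)) P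
              + ENNReal.ofReal (1 / (1 + γ))) := by
  have hTmem0 : (0:ℝ) ∈ Set.Icc 0 T := ⟨le_rfl, hT⟩
  set m := gridMesh n t with hm
  have hstep_le : ∀ k < n, t (k+1) - t k ≤ m := by
    intro k hk
    have : BddAbove (Set.range fun i : Fin n => t (i.1 + 1) - t i.1) := Set.Finite.bddAbove (Set.finite_range _)
    exact le_ciSup this ⟨k, hk⟩
  have hm0 : 0 ≤ m := Real.iSup_nonneg fun i => (sub_pos.2 (htmono i.1 i.2)).le
  have hLm : 0 < 1 - m * L := by rw [mul_comm]; linarith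
  have hLm1 : 1 - m * L ≤ 1 := by have := mul_nonneg hm0 hL; linarith
  have htmono' : ∀ i j, i ≤ j → j ≤ n → t i ≤ t j := by
    intro i j hij
    induction j, hij using Nat.le_induction with
    | base => intro _; exact le_rfl
    | succ j hj ih => intro h; exact (ih (by omega)).trans (htmono j (by omega)).le
  have hceil : ∀ k < n, ∀ s ∈ Set.Ioc (t k) (t (k+1)), gridCeil n t s = t (k+1) := by
    intro k hk s hs
    refine IsLeast.csInf_eq ⟨⟨⟨k+1, hk, rfl⟩, hs.2⟩, ?_⟩
    rintro x ⟨⟨i, hi, rfl⟩, hx⟩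
    by_contra hlt
    have hik : i ≤ k := by
      by_contra h
      exact hlt (htmono' (k+1) i (by omega) hi)
    have := htmono' i k hik hk.le
    linarith [hs.1]
  have hXm : ∀ s ∈ Set.Icc (0:ℝ) T, Measurable (X s) := fun s hs => (hXadapt s hs).mono (hF_le s) le_rfl
  have hXpos : ∀ s ∈ Set.Icc (0:ℝ) T, ∀ᵐ ω ∂P, 0 < X s ω := by
    intro s hs
    have h1 : ∀ᵐ ω ∂P, ¬ (X s ω = 0) := by rw [ae_iff]; simpa using hXzero s hs
    filter_upwards [h1] with ω h
    exact lt_of_le_of_ne (hXnonneg s ω) (Ne.symm h)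
  -- positivity of Y
  have hY : ∀ k ≤ n, (∃ Z : Ω → ℝ, @Measurable Ω ℝ (F (t k)) _ Z ∧ Y k =ᵐ[P] Z) ∧ ∀ᵐ ω ∂P, 0 < Y k ω := by
    intro k
    induction k with
    | zero =>
      intro _
      have e : Y 0 = X 0 := funext hY0
      rw [e, ht0]
      exact ⟨⟨X 0, hXadapt 0 hTmem0, ae_eq_rfl⟩, hXpos 0 hTmem0⟩
    | succ k ih =>
      intro hk
      obtain ⟨⟨Z, hZ, hYZ⟩, -⟩ := ih (by omega)
      have hkn : k < n := hk
      have hlt := htmono k hkn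
      have h1 := htmem k hkn.le
      have h2 := htmem (k+1) hk
      refine Y_step (F (t k)) (F (t (k+1))) P (hF_mono _ _ hlt.le) (hF_le _) (hF_le _) μ hμmeas
        (fun ω => W (t (k+1)) ω - W (t k) ω) ?_ L (t (k+1) - t k) (sub_pos.2 hlt) ?_
        (hWlaw _ _ h1.1 hlt.le h2.2) (hWindep _ _ h1.1 hlt.le h2.2) hμosl (Y k) (Y (k+1))
        (hYnonneg _ hk) Z hZ hYZ (hYrec k hkn)
      · exact (hWadapt _ h2).sub ((hWadapt _ h1).mono (hF_mono _ _ hlt.le) le_rfl)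
      · exact (mul_le_mul_of_nonneg_left (hstep_le k hkn) hL).trans_lt hmesh
  -- the remainder
  let R : ℕ → Ω → ℝ := fun k ω => |∫ s in (t k)..(t (k+1)), (μ (X s ω) - μ (X (t (k+1)) ω))|
  have hpath : ∀ᵐ ω ∂P, ∀ k ≤ n, |X (t k) ω - Y k ω| ≤
      (1 / (1 - m * L)) ^ n * ∑ j ∈ Finset.range n, R j ω := by
    have a1 : ∀ᵐ ω ∂P, ∀ k : Fin (n+1), X (t k) ω = X 0 ω + (∫ s in (0:ℝ)..(t k), μ (X s ω)) + W (t k) ω :=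
      ae_all_iff.2 fun k => hSDE _ (htmem _ (by omega))
    have a2 : ∀ᵐ ω ∂P, ∀ k : Fin (n+1), 0 < X (t k) ω :=
      ae_all_iff.2 fun k => hXpos _ (htmem _ (by omega))
    have a3 : ∀ᵐ ω ∂P, ∀ k : Fin (n+1), 0 < Y k ω :=
      ae_all_iff.2 fun k => (hY _ (by omega)).2
    have a4 : ∀ᵐ ω ∂P, ∀ k : Fin n, Y (k + 1) ω = Y k ω + μ (Y (k + 1) ω) * (t (k + 1) - t k)
        + (W (t (k + 1)) ω - W (t k) ω) :=
      ae_all_iff.2 fun k => hYrec _ k.2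
    filter_upwards [a1, a2, a3, a4, hXint] with ω a1 a2 a3 a4 hint
    refine rec_aux n (fun k => X (t k) ω - Y k ω) (fun k => R k ω) (1 - m * L) hLm hLm1
      (fun k => abs_nonneg _) (by simp [ht0, hY0]) ?_
    intro k hk
    have b1 := a1 ⟨k, by omega⟩
    have b1' := a1 ⟨k+1, by omega⟩
    have b2 := a2 ⟨k+1, by omega⟩
    have b3 := a3 ⟨k+1, by omega⟩
    have b4 := a4 ⟨k, hk⟩
    simp only at b1 b1' b2 b3 b4
    have hlt := htmono k hk
    have h1 := htmem k hk.le
    have h2 := htmem (k+1) hk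
    have hint' : IntervalIntegrable (fun s => μ (X s ω)) volume 0 T := by
      refine (intervalIntegrable_iff_integrableOn_Ioc_of_le hT).2 ?_
      have hh := (intervalIntegrable_iff_integrableOn_Ioc_of_le hT).1 hint
      have hae : AEMeasurable (fun s => μ (X s ω)) (volume.restrict (Set.Ioc 0 T)) :=
        hμmeas.comp_aemeasurable (((hXcont ω).mono Set.Ioc_subset_Icc_self).aemeasurable measurableSet_Ioc)
      exact (integrable_norm_iff hae.aestronglyMeasurable).1 hh
    have i1 : IntervalIntegrable (fun s => μ (X s ω)) volume 0 (t k) :=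
      hint'.mono_set (by rw [Set.uIcc_of_le h1.1, Set.uIcc_of_le hT]; exact Set.Icc_subset_Icc_right h1.2)
    have i2 : IntervalIntegrable (fun s => μ (X s ω)) volume (t k) (t (k+1)) :=
      hint'.mono_set (by rw [Set.uIcc_of_le hlt.le, Set.uIcc_of_le hT]; exact Set.Icc_subset_Icc h1.1 h2.2)
    have eint := intervalIntegral.integral_add_adjacent_intervals i1 i2
    have eR : ∫ s in (t k)..(t (k+1)), (μ (X s ω) - μ (X (t (k+1)) ω)) =
        (∫ s in (t k)..(t (k+1)), μ (X s ω)) - (t (k+1) - t k) * μ (X (t (k+1)) ω) := by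
      rw [intervalIntegral.integral_sub i2 intervalIntegrable_const]
      simp
    simp only [R]
    set r := ∫ s in (t k)..(t (k+1)), (μ (X s ω) - μ (X (t (k+1)) ω)) with hr
    set x' := X (t (k+1)) ω
    set y' := Y (k+1) ω
    set h := t (k+1) - t k with hh
    set e := X (t k) ω - Y k ω with he
    have hhpos : 0 < h := sub_pos.2 hlt
    have eq1 : x' - y' = e + h * (μ x' - μ y') + r := by
      linarith [eR, b1', b4, he, b1, eint]
    have osl := hμosl x' y' b2 b3
    have key : (1 - h * L) * (x' - y')^2 ≤ |x' - y'| * (|e| + |r|) := by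
      have k1 : (x' - y')^2 = (x'-y') * (e + r) + h * ((x'-y') * (μ x' - μ y')) := by
        calc (x' - y')^2 = (x'-y') * (x'-y') := sq _
          _ = (x'-y') * (e + h * (μ x' - μ y') + r) := by rw [← eq1]
          _ = _ := by ring
      have k2 : (x'-y') * (e + r) ≤ |x' - y'| * (|e| + |r|) := by
        refine (le_abs_self _).trans ?_
        rw [abs_mul]
        gcongr
        exact abs_add_le _ _
      have k3 := mul_le_mul_of_nonneg_left osl hhpos.le
      nlinarith
    have hhm : 1 - m * L ≤ 1 - h * L := by
      have := mul_le_mul_of_nonneg_right (hstep_le k hk) hL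
      linarith
    rcases eq_or_ne (x' - y') 0 with h0 | h0
    · simp only [h0, abs_zero, mul_zero]; positivity
    · have hp : 0 < |x' - y'| := abs_pos.2 h0
      rw [← sq_abs] at key
      have k5 : (1 - h * L) * |x' - y'| ≤ |e| + |r| := by
        refine le_of_mul_le_mul_left ?_ hp
        calc |x' - y'| * ((1 - h * L) * |x' - y'|) = (1 - h*L) * |x' - y'|^2 := by ring
          _ ≤ _ := key
      exact (mul_le_mul_of_nonneg_right hhm hp.le).trans k5
  -- sup
  set S : ℝ≥0∞ := ⨆ u ∈ Set.Icc (0:ℝ) T,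
            ((∫⁻ ω, ((2 : ℝ≥0∞) * ((ENNReal.ofReal (X u ω)) ^ (1 + γ))⁻¹) ^ (1 + ε) ∂P)
                  ^ (1 / (1 + ε))
              + ENNReal.ofReal (γ / (1 + γ)) *
                  eLpNorm (fun ω => (X u ω) ^ (1 / γ - γ)) (ENNReal.ofReal (1 + ε)) P
              + 2 * eLpNorm (fun ω => (X u ω) ^ (c + 1 - γ)) (ENNReal.ofReal (1 + ε)) P
              + ENNReal.ofReal (1 / (1 + γ))) with hSdef
  set D : Ω → ℝ := fun ω => ⨆ u : Set.Icc (0:ℝ) T, |X u.1 ω - X (gridCeil n t u.1) ω| with hDdef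
  set DD := (eLpNorm D (ENNReal.ofReal (γ * (1 + 1 / ε))) P) ^ γ with hDD
  have hDle : ∀ k < n, ∀ s ∈ Set.Ioc (t k) (t (k+1)), ∀ ω, |X s ω - X (t (k+1)) ω| ≤ D ω := by
    intro k hk s hs ω
    have hsI : s ∈ Set.Icc (0:ℝ) T := ⟨(htmem k hk.le).1.trans hs.1.le, hs.2.trans (htmem (k+1) hk).2⟩
    obtain ⟨C, hC⟩ := (isCompact_Icc.image_of_continuousOn (hXcont ω)).bddAbove
    have hC' : ∀ u ∈ Set.Icc (0:ℝ) T, X u ω ≤ C := fun u hu => hC ⟨u, hu, rfl⟩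
    have hceilmem : ∀ u ∈ Set.Icc (0:ℝ) T, gridCeil n t u ∈ Set.Icc (0:ℝ) T := by
      intro u hu
      have hne : {x | (∃ i ≤ n, x = t i) ∧ u ≤ x}.Nonempty := ⟨t n, ⟨n, le_rfl, rfl⟩, by rw [htn]; exact hu.2⟩
      have hfin : {x | (∃ i ≤ n, x = t i) ∧ u ≤ x}.Finite := by
        refine ((Set.finite_Iic n).image t).subset ?_
        rintro x ⟨⟨i, hi, rfl⟩, -⟩
        exact ⟨i, hi, rfl⟩
      obtain ⟨⟨i, hi, hxi⟩, -⟩ := hne.csInf_mem hfin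
      unfold gridCeil
      rw [hxi]; exact htmem i hi
    have hb : BddAbove (Set.range fun u : Set.Icc (0:ℝ) T => |X u.1 ω - X (gridCeil n t u.1) ω|) := by
      refine ⟨C, ?_⟩
      rintro _ ⟨u, rfl⟩
      have q1 := hC' u.1 u.2
      have q2 := hC' _ (hceilmem u.1 u.2)
      have q3 := hXnonneg u.1 ω
      have q4 := hXnonneg (gridCeil n t u.1) ω
      exact abs_le.2 ⟨by linarith, by linarith⟩
    have := le_ciSup hb ⟨s, hsI⟩
    simp only [hceil k hk s hs] at this
    exact this
  have hL1 : ∀ k < n, ∀ s ∈ Set.Ioc (t k) (t (k+1)),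
      ∫⁻ ω, ‖μ (X s ω) - μ (X (t (k+1)) ω)‖ₑ ∂P ≤ ENNReal.ofReal c * DD * (2 * S) := by
    intro k hk s hs
    have hsI : s ∈ Set.Icc (0:ℝ) T := ⟨(htmem k hk.le).1.trans hs.1.le, hs.2.trans (htmem (k+1) hk).2⟩
    have hkI := htmem (k+1) hk
    refine L1_aux P μ (X s) (X (t (k+1))) D (hXm _ hsI) (hXm _ hkI) (hXpos _ hsI) (hXpos _ hkI)
      (hDle k hk s hs) c ε γ hc hε hγ1 hγ2 hμlip S ?_
    rintro z (rfl | rfl)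
    · rw [hSdef]
      exact le_iSup₂_of_le s hsI le_rfl
    · rw [hSdef]
      exact le_iSup₂_of_le (t (k+1)) hkI le_rfl
  -- joint measurability
  let X' : ℝ → Ω → ℝ := fun s ω => X (Set.projIcc 0 T hT s).1 ω
  have hX'eq : ∀ s ∈ Set.Icc (0:ℝ) T, X' s = X s := by
    intro s hs
    funext ω
    simp only [X', Set.projIcc_of_mem hT hs]
  have hX'm : Measurable (Function.uncurry X') := by
    refine measurable_uncurry_of_continuous_of_measurable ?_ ?_
    · intro ω
      exact (continuousOn_iff_continuous_domRestrict.1 (hXcont ω)).comp continuous_projIcc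
    · intro s
      exact hXm _ (Set.projIcc 0 T hT s).2
  let g : ℕ → ℝ × Ω → ℝ≥0∞ := fun k p => ‖μ (X' p.1 p.2) - μ (X (t (k+1)) p.2)‖ₑ
  have hgm : ∀ k < n, Measurable (g k) := by
    intro k hk
    have q1 : Measurable fun p : ℝ × Ω => μ (X' p.1 p.2) := hμmeas.comp hX'm
    have q2 : Measurable fun p : ℝ × Ω => μ (X (t (k+1)) p.2) :=
      hμmeas.comp ((hXm _ (htmem (k+1) hk)).comp measurable_snd)
    exact (q1.sub q2).enorm
  have hRle : ∀ k < n, ∀ ω, ENNReal.ofReal (R k ω) ≤ ∫⁻ s in Set.Ioc (t k) (t (k+1)), g k (s, ω) := by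
    intro k hk ω
    simp only [R]
    rw [← Real.enorm_eq_ofReal_abs, intervalIntegral.integral_of_le (htmono k hk).le]
    refine (enorm_integral_le_lintegral_enorm _).trans_eq ?_
    refine setLIntegral_congr_fun measurableSet_Ioc ?_
    intro s hs
    have hsI : s ∈ Set.Icc (0:ℝ) T := ⟨(htmem k hk.le).1.trans hs.1.le, hs.2.trans (htmem (k+1) hk).2⟩
    simp only [g, hX'eq s hsI]
  have hRint : ∀ k < n, ∫⁻ ω, ∫⁻ s in Set.Ioc (t k) (t (k+1)), g k (s, ω) ∂volume ∂P ≤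
      ENNReal.ofReal c * DD * (2 * S) * ENNReal.ofReal (t (k+1) - t k) := by
    intro k hk
    rw [← lintegral_lintegral_swap (μ := volume.restrict (Set.Ioc (t k) (t (k+1)))) (ν := P)
      (f := fun s ω => g k (s, ω)) (hgm k hk).aemeasurable]
    calc _ ≤ ∫⁻ s in Set.Ioc (t k) (t (k+1)), ENNReal.ofReal c * DD * (2 * S) := by
          refine setLIntegral_mono' measurableSet_Ioc ?_
          intro s hs
          have hsI : s ∈ Set.Icc (0:ℝ) T := ⟨(htmem k hk.le).1.trans hs.1.le, hs.2.trans (htmem (k+1) hk).2⟩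
          simp only [g, hX'eq s hsI]
          exact hL1 k hk s hs
      _ = _ := by rw [setLIntegral_const, Real.volume_Ioc]
  set K := (1 / (1 - m * L)) ^ n with hK
  have hK0 : 0 ≤ K := by positivity
  rw [eLpNorm_one_eq_lintegral_enorm]
  calc _ ≤ ∫⁻ ω, ENNReal.ofReal K * (∑ k ∈ Finset.range n, ∫⁻ s in Set.Ioc (t k) (t (k+1)), g k (s, ω)) ∂P := by
        refine lintegral_mono_ae ?_
        filter_upwards [hpath] with ω hω
        have h1 : (⨆ k : Fin (n + 1), |X (t k.1) ω - Y k.1 ω|) ≤ K * ∑ j ∈ Finset.range n, R j ω :=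
          ciSup_le fun k => hω k.1 (by omega)
        rw [Real.enorm_of_nonneg (Real.iSup_nonneg fun _ => abs_nonneg _)]
        refine (ENNReal.ofReal_le_ofReal h1).trans ?_
        rw [ENNReal.ofReal_mul hK0, ENNReal.ofReal_sum_of_nonneg (fun _ _ => abs_nonneg _)]
        gcongr with k hk
        exact hRle k (Finset.mem_range.1 hk) ω
    _ = ENNReal.ofReal K * ∑ k ∈ Finset.range n, ∫⁻ ω, ∫⁻ s in Set.Ioc (t k) (t (k+1)), g k (s, ω) ∂volume ∂P := by
        rw [lintegral_const_mul' _ _ ENNReal.ofReal_ne_top, lintegral_finsetSum]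
        intro k hk
        exact (hgm k (Finset.mem_range.1 hk)).lintegral_prod_left'
    _ ≤ ENNReal.ofReal K * ∑ k ∈ Finset.range n,
          ENNReal.ofReal c * DD * (2 * S) * ENNReal.ofReal (t (k+1) - t k) := by
        gcongr with k hk
        exact hRint k (Finset.mem_range.1 hk)
    _ = ENNReal.ofReal K * (ENNReal.ofReal c * DD * (2 * S) * ENNReal.ofReal T) := by
        rw [← Finset.mul_sum, ← ENNReal.ofReal_sum_of_nonneg, Finset.sum_range_sub, htn, ht0, sub_zero]
        intro k hk
        exact (sub_pos.2 (htmono k (Finset.mem_range.1 hk))).le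
    _ = _ := by
        rw [ENNReal.ofReal_mul (by positivity), ENNReal.ofReal_mul (by positivity),
          ENNReal.ofReal_mul (by positivity)]
        simp only [ENNReal.ofReal_ofNat]
        ring

end
end

section
/- Let α ∈ (0,∞), μ ∈ C¹([0,∞), ℝ), σ ∈ C([0,∞), [0,∞)) satisfy σ(0) = 0, σ(x) > 0 for all x ∈ (0,∞), σ·σ ∈ C²([0,∞), [0,∞)), (σ·σ)'(0) > 0 and α = 2μ(0)/((σ·σ)'(0)) − 1/2. Define φ : [0,∞) → [0,∞) by φ(y) := ∫_0^y 1/σ(z) dz, let g : (0,∞) → ℝ be given by g(x) := (μ(y) − ¼(σ·σ)'(y))/σ(y) with y = φ^{−1}(x), and set L := max{ sup_{z∈(0,∞)} g'(z), 0 } ∈ [0,∞]. Assume there exists ρ ∈ [1,∞) such that limsup_{x→∞} [ max{μ(x),0}/x + σ(x)/x + |μ(x)|/x^ρ + max{g'(x),0} + |g'(x)|/x^ρ ] < ∞. Then: φ is well-defined and a bijection of [0,∞) onto [0,∞); the restriction of φ^{−1} to (0,∞) is continuously differentiable; g is well-defined and continuously differentiable on (0,∞); L < ∞; for every t ∈ (0,∞)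 with tL < 1 the map (0,∞) ∋ x ↦ x − t·g(x) ∈ ℝ is a bijection onto ℝ; limsup_{x↓0} ( |μ(x)−μ(0)| + |(σ·σ)'(x)−(σ·σ)'(0)| )/σ(x) < ∞; and there exists c ∈ [0,∞) such that for all x, y ∈ (0,∞): (x−y)(g(x)−g(y)) ≤ L(x−y)², |g(x)−g(y)| ≤ c|x−y|(1 + 1/(xy) + x^c + y^c), and α − c(x + x^c) ≤ x·g(x) ≤ c(1+x²). -/
open MeasureTheory Filter Set
open scoped Topology ENNReal

noncomputable section

/-- The Lamperti transform `φ(y) = ∫_0^y 1/σ(z) dz`. -/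
def besselPhi (σ : ℝ → ℝ) (y : ℝ) : ℝ := ∫ z in (0:ℝ)..y, (σ z)⁻¹

/-- The inverse of the Lamperti transform `φ` on `[0,∞)`. -/
def besselInv (σ : ℝ → ℝ) : ℝ → ℝ := Function.invFunOn (besselPhi σ) (Set.Ici 0)

/-- The derivative `(σ·σ)'` (with one-sided derivative at the boundary point `0`). -/
def sqDeriv (σ : ℝ → ℝ) : ℝ → ℝ := derivWithin (fun x => σ x * σ x) (Set.Ici 0)

/-- The drift `g = ((μ - ¼(σ·σ)')/σ) ∘ φ⁻¹` of the transformed SDE. -/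
def besselG (μ σ : ℝ → ℝ) (x : ℝ) : ℝ :=
  (μ (besselInv σ x) - (1 / 4) * sqDeriv σ (besselInv σ x)) / σ (besselInv σ x)

/-- `L = [sup_{z ∈ (0,∞)} g'(z)]⁺ ∈ [0,∞]`, computed in the extended nonnegative reals. -/
def besselL (μ σ : ℝ → ℝ) : ℝ≥0∞ :=
  ⨆ z ∈ Set.Ioi (0:ℝ), ENNReal.ofReal (deriv (besselG μ σ) z)

theorem aux_mono {f f' : ℝ → ℝ} {a b : ℝ} (hab : a ≤ b) (hc : ContinuousOn f (Icc a b))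
    (hd : ∀ x ∈ Ioo a b, HasDerivAt f (f' x) x) (hn : ∀ x ∈ Ioo a b, 0 ≤ f' x) : f a ≤ f b := by
  rcases hab.eq_or_lt with h | h
  · rw [h]
  obtain ⟨c, hc1, hc2⟩ := exists_hasDerivAt_eq_slope f f' h hc hd
  have h1 := hn c hc1
  rw [hc2] at h1
  have h2 : 0 < b - a := by linarith
  by_contra h3
  push Not at h3
  have := div_neg_of_neg_of_pos (show f b - f a < 0 by linarith) h2
  linarith

theorem aux_mvt {f f' : ℝ → ℝ} {a b : ℝ} (hab : a < b) (hc : ContinuousOn f (Icc a b))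
    (hd : ∀ x ∈ Ioo a b, HasDerivAt f (f' x) x) : ∃ c ∈ Ioo a b, f b - f a = f' c * (b - a) := by
  obtain ⟨c, hc1, hc2⟩ := exists_hasDerivAt_eq_slope f f' hab hc hd
  refine ⟨c, hc1, ?_⟩
  rw [hc2]
  have h2 : b - a ≠ 0 := by linarith
  field_simp

theorem aux_c1 {F : ℝ → ℝ} (hF : ContDiffOn ℝ 1 F (Ici 0)) :
    ContinuousOn (derivWithin F (Ici 0)) (Ici 0) ∧
    (∀ x > 0, HasDerivAt F (derivWithin F (Ici 0) x) x) ∧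
    ∃ K, 0 ≤ K ∧ ∀ x ∈ Icc (0:ℝ) 1, |derivWithin F (Ici 0) x| ≤ K ∧ |F x - F 0| ≤ K * x := by
  have hu : UniqueDiffOn ℝ (Ici (0:ℝ)) := uniqueDiffOn_Ici 0
  have hc := hF.continuousOn_derivWithin hu le_rfl
  have hd : ∀ x > 0, HasDerivAt F (derivWithin F (Ici 0) x) x := by
    intro x hx
    have h1 := (hF.differentiableOn (by norm_num) x hx.le).hasDerivWithinAt
    exact h1.hasDerivAt (Ici_mem_nhds hx)
  refine ⟨hc, hd, ?_⟩
  obtain ⟨K, hK⟩ := (isCompact_Icc (a := (0:ℝ)) (b := 1)).exists_bound_of_continuousOn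
    (hc.mono Icc_subset_Ici_self)
  have hK0 : 0 ≤ K := (norm_nonneg _).trans (hK 0 (by simp))
  refine ⟨K, hK0, fun x hx => ⟨hK x hx, ?_⟩⟩
  rcases hx.1.eq_or_lt with h | h
  · simp [← h]
  obtain ⟨c, hc1, hc2⟩ := aux_mvt h (hF.continuousOn.mono Icc_subset_Ici_self)
    (fun y hy => hd y hy.1)
  rw [hc2, abs_mul]
  have := hK c ⟨hc1.1.le, hc1.2.le.trans hx.2⟩
  rw [Real.norm_eq_abs] at this
  rw [sub_zero, abs_of_pos h]
  gcongr

theorem aux_contDiffOn {f f' : ℝ → ℝ} (hd : ∀ x > 0, HasDerivAt f (f' x) x)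
    (hc : ContinuousOn f' (Ioi 0)) : ContDiffOn ℝ 1 f (Ioi 0) := by
  rw [contDiffOn_one_iff_derivWithin isOpen_Ioi.uniqueDiffOn]
  refine ⟨fun x hx => (hd x hx).differentiableAt.differentiableWithinAt, hc.congr ?_⟩
  intro x hx
  exact (hd x hx).hasDerivWithinAt.derivWithin (isOpen_Ioi.uniqueDiffOn x hx)

theorem aux_phi {σ : ℝ → ℝ} (hσcont : ContinuousOn σ (Ici 0))
    (hσpos : ∀ x : ℝ, 0 < x → 0 < σ x)
    {a δ : ℝ} (ha : 0 < a) (hδ : 0 < δ) (hlow : ∀ x, 0 < x → x ≤ δ → a * x ≤ σ x * σ x)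
    {C : ℝ} (hup : ∀ᶠ x in atTop, σ x / x ≤ C) :
    (∀ y : ℝ, 0 ≤ y → IntegrableOn (fun z => (σ z)⁻¹) (Ioc 0 y)) ∧
    BijOn (besselPhi σ) (Ici 0) (Ici 0) ∧ StrictMonoOn (besselPhi σ) (Ici 0) ∧
    besselPhi σ 0 = 0 ∧ (∀ x > 0, HasDerivAt (besselPhi σ) (σ x)⁻¹ x) := by
  have hcinv : ContinuousOn (fun z => (σ z)⁻¹) (Ioi 0) :=
    (hσcont.mono Ioi_subset_Ici_self).inv₀ (fun x hx => (hσpos x hx).ne')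
  have hint0 : IntegrableOn (fun z => (σ z)⁻¹) (Ioc 0 δ) := by
    have h1 : IntegrableOn (fun x : ℝ => (√a)⁻¹ * x ^ (-(1/2) : ℝ)) (Ioc 0 δ) := by
      have := (intervalIntegral.intervalIntegrable_rpow' (a := 0) (b := δ)
        (show (-1:ℝ) < -(1/2) by norm_num)).const_mul (√a)⁻¹
      rwa [intervalIntegrable_iff_integrableOn_Ioc_of_le hδ.le] at this
    refine Integrable.mono' h1
      ((hcinv.mono Ioc_subset_Ioi_self).aestronglyMeasurable measurableSet_Ioc) ?_
    filter_upwards [ae_restrict_mem measurableSet_Ioc] with x hx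
    have hs := hσpos x hx.1
    rw [Real.norm_eq_abs, abs_of_pos (inv_pos.2 hs), Real.rpow_neg hx.1.le, ← Real.sqrt_eq_rpow,
      ← mul_inv, ← Real.sqrt_mul ha.le]
    apply inv_anti₀ (Real.sqrt_pos.2 (mul_pos ha hx.1))
    rw [Real.sqrt_le_left hs.le, sq]
    exact hlow x hx.1 hx.2
  have hint : ∀ y : ℝ, 0 ≤ y → IntegrableOn (fun z => (σ z)⁻¹) (Ioc 0 y) := by
    intro y hy
    have h2 : IntegrableOn (fun z => (σ z)⁻¹) (Icc δ (max y δ)) :=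
      (hcinv.mono (fun z hz => lt_of_lt_of_le hδ hz.1)).integrableOn_Icc
    refine (hint0.union h2).mono_set ?_
    intro z hz
    by_cases h : z ≤ δ
    · exact Or.inl ⟨hz.1, h⟩
    · exact Or.inr ⟨(not_le.1 h).le, hz.2.trans (le_max_left _ _)⟩
  have hii : ∀ y : ℝ, 0 ≤ y → IntervalIntegrable (fun z => (σ z)⁻¹) volume 0 y := by
    intro y hy
    rw [intervalIntegrable_iff_integrableOn_Ioc_of_le hy]
    exact hint y hy
  have hd : ∀ x > 0, HasDerivAt (besselPhi σ) (σ x)⁻¹ x := by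
    intro x hx
    exact intervalIntegral.integral_hasDerivAt_right (hii x hx.le)
      (hcinv.stronglyMeasurableAtFilter isOpen_Ioi x hx) (hcinv.continuousAt (Ioi_mem_nhds hx))
  have h0 : besselPhi σ 0 = 0 := by simp [besselPhi]
  have hcont : ContinuousOn (besselPhi σ) (Ici 0) := by
    intro x hx
    have hx' : (0:ℝ) ≤ x := hx
    have h1 := intervalIntegral.continuousOn_primitive_interval' (hii (x+1) (by linarith))
      (left_mem_uIcc)
    rw [uIcc_of_le (by linarith)] at h1
    have h2 := h1 x ⟨hx', by linarith⟩
    refine ContinuousWithinAt.mono_of_mem_nhdsWithin h2 ?_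
    rw [mem_nhdsWithin]
    exact ⟨Iio (x+1), isOpen_Iio, by simp, fun z hz => ⟨hz.2, le_of_lt hz.1⟩⟩
  have hmono : StrictMonoOn (besselPhi σ) (Ici 0) := by
    apply strictMonoOn_of_deriv_pos (convex_Ici 0) hcont
    intro x hx
    rw [interior_Ici] at hx
    rw [(hd x hx).deriv]
    exact inv_pos.2 (hσpos x hx)
  have htop : Tendsto (besselPhi σ) atTop atTop := by
    obtain ⟨R, hR⟩ := eventually_atTop.1 hup
    set R' := max R 1 with hR'
    have hR1 : 1 ≤ R' := le_max_right _ _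
    have hle : ∀ x, R' ≤ x → σ x ≤ C * x := by
      intro x hx
      have := hR x ((le_max_left _ _).trans hx)
      rwa [div_le_iff₀ (by linarith)] at this
    have hC : 0 < C := by
      have h1 := hle R' le_rfl
      have h2 := hσpos R' (by linarith)
      by_contra h
      push Not at h
      nlinarith
    have key : ∀ y, R' ≤ y → besselPhi σ R' - C⁻¹ * Real.log R' + C⁻¹ * Real.log y
        ≤ besselPhi σ y := by
      intro y hy
      have := aux_mono (f := fun z => besselPhi σ z - C⁻¹ * Real.log z)
        (f' := fun z => (σ z)⁻¹ - C⁻¹ * z⁻¹) hy ?_ ?_ ?_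
      · linarith
      · apply ContinuousOn.sub
        · exact hcont.mono (fun z hz => le_trans (by linarith) hz.1)
        · refine ContinuousOn.mul continuousOn_const (Real.continuousOn_log.mono ?_)
          intro z hz
          have := hz.1
          simp only [mem_compl_iff, mem_singleton_iff]
          linarith
      · intro z hz
        have hz0 : 0 < z := by linarith [hz.1]
        exact (hd z hz0).sub ((Real.hasDerivAt_log hz0.ne').const_mul _)
      · intro z hz
        have hz0 : 0 < z := by linarith [hz.1]
        rw [← mul_inv, sub_nonneg]
        exact inv_anti₀ (hσpos z hz0) (hle z hz.1.le)
    refine tendsto_atTop_mono' _ (eventually_atTop.2 ⟨R', key⟩) ?_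
    exact tendsto_atTop_add_const_left _ _ (Real.tendsto_log_atTop.const_mul_atTop (inv_pos.2 hC))
  refine ⟨hint, ⟨?_, hmono.injOn, ?_⟩, hmono, h0, hd⟩
  · intro x hx
    have := hmono.monotoneOn (mem_Ici.2 (le_refl (0:ℝ))) hx hx
    rw [h0] at this
    exact this
  · have := isPreconnected_Ici.intermediate_value_Ici (a := (0:ℝ)) (mem_Ici.2 (le_refl (0:ℝ)))
      (le_principal_iff.2 (Ici_mem_atTop 0)) hcont htop
    rw [h0] at this
    exact this

theorem aux_inv {σ : ℝ → ℝ} (hσpos : ∀ x : ℝ, 0 < x → 0 < σ x)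
    (hb : BijOn (besselPhi σ) (Ici 0) (Ici 0)) (hm : StrictMonoOn (besselPhi σ) (Ici 0))
    (h0 : besselPhi σ 0 = 0) (hd : ∀ x > 0, HasDerivAt (besselPhi σ) (σ x)⁻¹ x) :
    besselInv σ 0 = 0 ∧ (∀ x > 0, 0 < besselInv σ x) ∧ ContinuousOn (besselInv σ) (Ici 0) ∧
    (∀ x > 0, HasDerivAt (besselInv σ) (σ (besselInv σ x)) x) := by
  have hi : InvOn (besselInv σ) (besselPhi σ) (Ici 0) (Ici 0) := hb.invOn_invFunOn
  have hbi : BijOn (besselInv σ) (Ici 0) (Ici 0) := (bijOn_comm hi).2 hb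
  have hz : besselInv σ 0 = 0 := by
    have := hi.1 (mem_Ici.2 (le_refl (0:ℝ)))
    rwa [h0] at this
  have hmi : StrictMonoOn (besselInv σ) (Ici 0) := by
    intro x hx y hy hxy
    by_contra h
    push Not at h
    have := hm.monotoneOn (hbi.mapsTo hy) (hbi.mapsTo hx) h
    rw [hi.2 hx, hi.2 hy] at this
    linarith
  have hpos : ∀ x > 0, 0 < besselInv σ x := by
    intro x hx
    have := hmi (mem_Ici.2 (le_refl (0:ℝ))) hx.le hx
    rwa [hz] at this
  have hca : ∀ x > 0, ContinuousAt (besselInv σ) x := by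
    intro x hx
    refine hmi.continuousAt_of_image_mem_nhds (Ici_mem_nhds hx) ?_
    rw [hbi.image_eq]
    exact Ici_mem_nhds (hpos x hx)
  refine ⟨hz, hpos, ?_, ?_⟩
  · intro x hx
    rcases (show (0:ℝ) ≤ x from hx).eq_or_lt with h | h
    · subst h
      refine hmi.continuousWithinAt_right_of_image_mem_nhdsWithin self_mem_nhdsWithin ?_
      rw [hbi.image_eq, hz]
      exact self_mem_nhdsWithin
    · exact (hca x h).continuousWithinAt
  · intro x hx
    have := HasDerivAt.of_local_left_inverse (hca x hx) (hd _ (hpos x hx))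
      (inv_pos.2 (hσpos _ (hpos x hx))).ne' ?_
    · rwa [inv_inv] at this
    · filter_upwards [Ici_mem_nhds hx] with y hy using hi.2 hy

theorem aux_near {ψ u F m m1 : ℝ → ℝ} {D α K : ℝ} (hD : 0 < D) (hα : 0 < α) (hK : 0 ≤ K)
    (hψ0 : ψ 0 = 0) (hψpos : ∀ x > 0, 0 < ψ x) (hψc : ContinuousOn ψ (Ici 0))
    (hψd : ∀ x > 0, HasDerivAt ψ (u x) x)
    (hu0 : u 0 = 0) (huc : ContinuousOn u (Ici 0))
    (hud : ∀ x > 0, HasDerivAt u (F (ψ x) / 2) x)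
    (hF : ∀ y ∈ Icc (0:ℝ) 1, |F y - D| ≤ K * y)
    (hm : ∀ y ∈ Icc (0:ℝ) 1, |m y - α * D / 2| ≤ K * y)
    (hm1 : ∀ y ∈ Icc (0:ℝ) 1, |m1 y| ≤ K) :
    ∃ δ > 0, ∃ K', 0 ≤ K' ∧ ∀ x, 0 < x → x ≤ δ →
      |x * (m (ψ x) / u x) - α| ≤ K' * x ∧
      |m1 (ψ x) - m (ψ x) * F (ψ x) / (2 * u x ^ 2)| ≤ K' / x ^ 2 ∧
      m1 (ψ x) - m (ψ x) * F (ψ x) / (2 * u x ^ 2) ≤ K' := by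
  obtain ⟨ε, hε, hε1, hε2, hε3⟩ : ∃ ε > 0, ε ≤ 1 ∧ K * ε ≤ D / 2 ∧ K * ε ≤ α * D / 2 := by
    refine ⟨min 1 (min (D / (2 * (K + 1))) (α * D / (2 * (K + 1)))), by positivity,
      min_le_left _ _, ?_, ?_⟩
    · calc _ ≤ (K + 1) * (D / (2 * (K + 1))) := by
            gcongr
            · linarith
            · exact (min_le_right _ _).trans (min_le_left _ _)
        _ = _ := by field_simp
    · calc _ ≤ (K + 1) * (α * D / (2 * (K + 1))) := by
            gcongr
            · linarith
            · exact (min_le_right _ _).trans (min_le_right _ _)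
        _ = _ := by field_simp
  obtain ⟨δ, hδ, hδ1, hψε⟩ : ∃ δ > 0, δ ≤ 1 ∧ ∀ x, 0 < x → x ≤ δ → ψ x ≤ ε := by
    have h1 := hψc 0 (mem_Ici.2 le_rfl)
    rw [Metric.continuousWithinAt_iff] at h1
    obtain ⟨δ, hδ, h⟩ := h1 ε hε
    refine ⟨min 1 (δ / 2), by positivity, min_le_left _ _, fun x hx hx2 => ?_⟩
    have h3 := h (x := x) hx.le (by
      rw [Real.dist_eq, sub_zero, abs_of_pos hx]
      have := hx2.trans (min_le_right _ _)
      linarith)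
    rw [hψ0, Real.dist_eq, sub_zero] at h3
    exact (le_abs_self _).trans h3.le
  have hmem : ∀ x, 0 < x → x ≤ δ → ψ x ∈ Icc (0:ℝ) 1 := fun x hx hx2 =>
    ⟨(hψpos x hx).le, (hψε x hx hx2).trans hε1⟩
  have hFb : ∀ x, 0 < x → x ≤ δ → D / 2 ≤ F (ψ x) ∧ F (ψ x) ≤ 3 * D / 2 := by
    intro x hx hx2
    have h1 := hF _ (hmem x hx hx2)
    have h2 : K * ψ x ≤ K * ε := by gcongr; exact hψε x hx hx2
    have := abs_le.1 h1
    constructor <;> linarith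
  have hmb : ∀ x, 0 < x → x ≤ δ → 0 ≤ m (ψ x) ∧ m (ψ x) ≤ α * D := by
    intro x hx hx2
    have h1 := hm _ (hmem x hx hx2)
    have h2 : K * ψ x ≤ K * ε := by gcongr; exact hψε x hx hx2
    have := abs_le.1 h1
    constructor <;> linarith
  have humv : ∀ x, 0 < x → ∃ ξ, 0 < ξ ∧ ξ < x ∧ u x = F (ψ ξ) / 2 * x := by
    intro x hx
    obtain ⟨c, hc, h⟩ := aux_mvt hx (huc.mono Icc_subset_Ici_self) (fun y hy => hud y hy.1)
    refine ⟨c, hc.1, hc.2, ?_⟩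
    rwa [hu0, sub_zero, sub_zero] at h
  have hub : ∀ x, 0 < x → x ≤ δ → D / 4 * x ≤ u x ∧ u x ≤ D * x := by
    intro x hx hx2
    obtain ⟨ξ, h1, h2, h3⟩ := humv x hx
    obtain ⟨h4, h5⟩ := hFb ξ h1 (h2.le.trans hx2)
    rw [h3]
    constructor
    · gcongr ?_ * x
      linarith
    · gcongr ?_ * x
      linarith
  have hψb : ∀ x, 0 < x → x ≤ δ → ψ x ≤ D * x := by
    intro x hx hx2
    obtain ⟨c, hc, h⟩ := aux_mvt hx (hψc.mono Icc_subset_Ici_self) (fun y hy => hψd y hy.1)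
    rw [hψ0, sub_zero, sub_zero] at h
    rw [h]
    gcongr
    have h1 := (hub c hc.1 (hc.2.le.trans hx2)).2
    have : D * c ≤ D * 1 := by gcongr; linarith [hc.2]
    linarith
  have hulin : ∀ x, 0 < x → x ≤ δ → |D * x / 2 - u x| ≤ K * D * x ^ 2 := by
    intro x hx hx2
    obtain ⟨ξ, h1, h2, h3⟩ := humv x hx
    have h4 := hF _ (hmem ξ h1 (h2.le.trans hx2))
    have h5 := hψb ξ h1 (h2.le.trans hx2)
    rw [h3, show D * x / 2 - F (ψ ξ) / 2 * x = -((F (ψ ξ) - D) * (x / 2)) by ring, abs_neg, abs_mul,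
      abs_of_pos (show 0 < x / 2 by linarith)]
    calc _ ≤ K * (D * x) * x := by
          gcongr ?_ * ?_
          · refine h4.trans ?_
            gcongr
            refine h5.trans ?_
            gcongr
          · linarith
      _ = _ := by ring
  refine ⟨δ, hδ, 4 * K * (1 + α) + K + 12 * α, by positivity, fun x hx hx2 => ?_⟩
  have hup : 0 < u x := lt_of_lt_of_le (by positivity) (hub x hx hx2).1
  have hu1 := (hub x hx hx2).1
  obtain ⟨hm2, hm3⟩ := hmb x hx hx2
  obtain ⟨hF2, hF3⟩ := hFb x hx hx2
  have hm1' := hm1 _ (hmem x hx hx2)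
  have hq0 : 0 ≤ m (ψ x) * F (ψ x) / (2 * u x ^ 2) := by
    have : 0 ≤ F (ψ x) := by linarith
    positivity
  have hx1 : x ≤ 1 := hx2.trans hδ1
  refine ⟨?_, ?_, ?_⟩
  · rw [show x * (m (ψ x) / u x) - α = (x * (m (ψ x) - α * D / 2) + α * (D * x / 2 - u x)) / u x by
      field_simp; ring, abs_div, abs_of_pos hup, div_le_iff₀ hup]
    have h1 := hm _ (hmem x hx hx2)
    have h2 := hulin x hx hx2
    have h3 := hψb x hx hx2
    calc _ ≤ |x * (m (ψ x) - α * D / 2)| + |α * (D * x / 2 - u x)| := abs_add_le _ _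
      _ = x * |m (ψ x) - α * D / 2| + α * |D * x / 2 - u x| := by
          rw [abs_mul, abs_mul, abs_of_pos hx, abs_of_pos hα]
      _ ≤ x * (K * (D * x)) + α * (K * D * x ^ 2) := by
          gcongr
          exact h1.trans (by gcongr)
      _ = (4 * K * (1 + α)) * x * (D / 4 * x) := by ring
      _ ≤ _ := by
          gcongr
          have : 0 ≤ K + 12 * α := by positivity
          linarith
  · have hq : m (ψ x) * F (ψ x) / (2 * u x ^ 2) ≤ 12 * α / x ^ 2 := by
      calc _ ≤ (α * D) * (3 * D / 2) / (2 * (D / 4 * x) ^ 2) := by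
            gcongr
            linarith
        _ = _ := by field_simp; ring
    have hk : K ≤ K / x ^ 2 := by
      rw [le_div_iff₀ (by positivity)]
      have : x ^ 2 ≤ 1 := pow_le_one₀ hx.le hx1
      nlinarith
    have h3 : 0 ≤ 4 * K * (1 + α) / x ^ 2 := by positivity
    calc _ ≤ |m1 (ψ x)| + |m (ψ x) * F (ψ x) / (2 * u x ^ 2)| := abs_sub _ _
      _ ≤ K / x ^ 2 + 12 * α / x ^ 2 := by
          rw [abs_of_nonneg hq0]
          linarith
      _ ≤ 4 * K * (1 + α) / x ^ 2 + K / x ^ 2 + 12 * α / x ^ 2 := by linarith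
      _ = _ := by ring
  · have := (abs_le.1 hm1').2
    have : 0 ≤ 4 * K * (1 + α) + 12 * α := by positivity
    linarith

theorem aux_bounds {g1 : ℝ → ℝ} (hc : ContinuousOn g1 (Ioi 0)) {δ K C ρ : ℝ} (hδ : 0 < δ)
    (hK : 0 ≤ K) (hn1 : ∀ x, 0 < x → x ≤ δ → |g1 x| ≤ K / x ^ 2)
    (hn2 : ∀ x, 0 < x → x ≤ δ → g1 x ≤ K)
    (hfar : ∀ᶠ x in atTop, g1 x ≤ C ∧ |g1 x| ≤ C * x ^ ρ) :
    ∃ M, 0 ≤ M ∧ (∀ x > 0, g1 x ≤ M) ∧ ∀ x > 0, |g1 x| ≤ M * (1 + 1 / x ^ 2 + x ^ ρ) := by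
  obtain ⟨R, hR⟩ := eventually_atTop.1 hfar
  obtain ⟨N, hN⟩ := (isCompact_Icc (a := δ) (b := max R δ)).exists_bound_of_continuousOn
    (hc.mono (fun z hz => lt_of_lt_of_le hδ hz.1))
  have hN0 : 0 ≤ N := (norm_nonneg _).trans (hN δ ⟨le_rfl, le_max_right _ _⟩)
  have hC := abs_nonneg C
  have hC' := le_abs_self C
  refine ⟨K + N + |C|, by positivity, fun x hx => ?_, fun x hx => ?_⟩
  · rcases le_total x δ with h | h
    · linarith [hn2 x hx h]
    rcases le_total x (max R δ) with h2 | h2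
    · have := hN x ⟨h, h2⟩
      rw [Real.norm_eq_abs] at this
      linarith [le_abs_self (g1 x)]
    · linarith [(hR x ((le_max_left _ _).trans h2)).1]
  · have h1 : 0 ≤ 1 / x ^ 2 := by positivity
    have h2 : 0 ≤ x ^ ρ := by positivity
    have e1 : K * (1 / x ^ 2) ≤ (K + N + |C|) * (1 + 1 / x ^ 2 + x ^ ρ) := by
      gcongr <;> linarith
    have e2 : N * 1 ≤ (K + N + |C|) * (1 + 1 / x ^ 2 + x ^ ρ) := by
      gcongr <;> linarith
    have e3 : |C| * x ^ ρ ≤ (K + N + |C|) * (1 + 1 / x ^ 2 + x ^ ρ) := by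
      gcongr <;> linarith
    rcases le_total x δ with h | h
    · have := hn1 x hx h
      rw [div_eq_mul_one_div] at this
      linarith
    rcases le_total x (max R δ) with h3 | h3
    · have := hN x ⟨h, h3⟩
      rw [Real.norm_eq_abs] at this
      linarith
    · have := (hR x ((le_max_left _ _).trans h3)).2
      have : C * x ^ ρ ≤ |C| * x ^ ρ := by gcongr
      linarith

theorem aux_rpow {x a b c : ℝ} (hx : 0 < x) (hab : a ≤ b) (hbc : b ≤ c) :
    x ^ b ≤ x ^ a + x ^ c := by
  have h1 : 0 < x ^ a := by positivity
  have h2 : 0 < x ^ c := by positivity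
  rcases le_total x 1 with h | h
  · linarith [Real.rpow_le_rpow_of_exponent_ge hx h hab]
  · linarith [Real.rpow_le_rpow_of_exponent_le h hbc]

theorem aux_lip {g g1 : ℝ → ℝ} (hd : ∀ x > 0, HasDerivAt g (g1 x) x) {M ρ : ℝ} (hρ : 0 ≤ ρ)
    (hM : 0 ≤ M) (hg1 : ∀ x > 0, |g1 x| ≤ M * (1 + 1 / x ^ 2 + x ^ ρ)) {x y : ℝ} (hx : 0 < x)
    (hxy : x ≤ y) : |g y - g x| ≤ M * (y - x) * (1 + 1 / (x * y) + y ^ ρ) := by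
  have hy : 0 < y := hx.trans_le hxy
  have hBd : ∀ z > 0, HasDerivAt (fun z => M * (z - z⁻¹ + y ^ ρ * z))
      (M * (1 + 1 / z ^ 2 + y ^ ρ)) z := by
    intro z hz
    have := ((((hasDerivAt_id z).sub (hasDerivAt_inv hz.ne')).add
      ((hasDerivAt_id z).const_mul (y ^ ρ))).const_mul M)
    refine this.congr_deriv ?_
    rw [one_div]
    ring
  have hle : ∀ z ∈ Ioo x y, |g1 z| ≤ M * (1 + 1 / z ^ 2 + y ^ ρ) := by
    intro z hz
    have hz0 : 0 < z := hx.trans hz.1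
    refine (hg1 z hz0).trans ?_
    gcongr
    exact hz.2.le
  have key : M * (y - x) * (1 + 1 / (x * y) + y ^ ρ) =
      M * (y - y⁻¹ + y ^ ρ * y) - M * (x - x⁻¹ + y ^ ρ * x) := by
    field_simp
    ring
  have hpos : ∀ z ∈ Icc x y, 0 < z := fun z hz => lt_of_lt_of_le hx hz.1
  have hpos' : ∀ z ∈ Ioo x y, 0 < z := fun z hz => lt_trans hx hz.1
  rw [key, abs_le]
  constructor
  · have := aux_mono (f := fun z => M * (z - z⁻¹ + y ^ ρ * z) + g z) hxy
      (fun z hz => ((hBd z (hpos z hz)).add (hd z (hpos z hz))).continuousAt.continuousWithinAt)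
      (fun z hz => (hBd z (hpos' z hz)).add (hd z (hpos' z hz)))
      (fun z hz => by linarith [(abs_le.1 (hle z hz)).1])
    linarith
  · have := aux_mono (f := fun z => M * (z - z⁻¹ + y ^ ρ * z) - g z) hxy
      (fun z hz => ((hBd z (hpos z hz)).sub (hd z (hpos z hz))).continuousAt.continuousWithinAt)
      (fun z hz => (hBd z (hpos' z hz)).sub (hd z (hpos' z hz)))
      (fun z hz => by linarith [(abs_le.1 (hle z hz)).2])
    linarith

theorem aux_onesided {g g1 : ℝ → ℝ} (hd : ∀ x > 0, HasDerivAt g (g1 x) x) {L : ℝ}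
    (hL : ∀ x > 0, g1 x ≤ L) {x y : ℝ} (hx : 0 < x) (hxy : x ≤ y) : g y - g x ≤ L * (y - x) := by
  have hpos : ∀ z ∈ Icc x y, 0 < z := fun z hz => lt_of_lt_of_le hx hz.1
  have hpos' : ∀ z ∈ Ioo x y, 0 < z := fun z hz => lt_trans hx hz.1
  have h : ∀ z > 0, HasDerivAt (fun z => L * z - g z) (L * 1 - g1 z) z := fun z hz =>
    ((hasDerivAt_id z).const_mul L).sub (hd z hz)
  have := aux_mono (f := fun z => L * z - g z) hxy
      (fun z hz => (h z (hpos z hz)).continuousAt.continuousWithinAt)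
      (fun z hz => h z (hpos' z hz))
      (fun z hz => by linarith [hL z (hpos' z hz)])
  linarith

theorem aux_final {g g1 : ℝ → ℝ} (hd : ∀ x > 0, HasDerivAt g (g1 x) x) {α δ K L M ρ : ℝ}
    (hα : 0 < α) (hδ : 0 < δ) (hK : 0 ≤ K) (hnear : ∀ x, 0 < x → x ≤ δ → |x * g x - α| ≤ K * x)
    (hρ : 1 ≤ ρ) (hL0 : 0 ≤ L) (hL : ∀ x > 0, g1 x ≤ L)
    (hM : 0 ≤ M) (hg1 : ∀ x > 0, |g1 x| ≤ M * (1 + 1 / x ^ 2 + x ^ ρ)) :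
    ∃ c : ℝ, 0 ≤ c ∧ ∀ x y : ℝ, 0 < x → 0 < y →
        (x - y) * (g x - g y) ≤ L * (x - y) ^ 2
        ∧ |g x - g y| ≤ c * |x - y| * (1 + 1 / (x * y) + x ^ c + y ^ c)
        ∧ α - c * (x + x ^ c) ≤ x * g x
        ∧ x * g x ≤ c * (1 + x ^ 2) := by
  set G := |g δ| with hG
  have hG0 : 0 ≤ G := abs_nonneg _
  set B := α / δ + G + M * (1 + 1 / δ ^ 2) + M with hB
  have hB0 : 0 ≤ B := by positivity
  set c := ρ + 2 + K + α + G + L + 2 * M + 2 * B with hc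
  have hcρ : ρ + 2 ≤ c := by
    have : 0 ≤ K + α + G + L + 2 * M + 2 * B := by positivity
    linarith
  have hcM : 2 * M ≤ c := by
    have : 0 ≤ ρ + 2 + K + α + G + L + 2 * B := by positivity
    linarith
  have hcB : 2 * B ≤ c := by
    have : 0 ≤ ρ + 2 + K + α + G + L + 2 * M := by positivity
    linarith
  have hcK : K + α ≤ c := by
    have : 0 ≤ ρ + 2 + G + L + 2 * M + 2 * B := by positivity
    linarith
  have hcG : G + L ≤ c := by
    have : 0 ≤ ρ + 2 + K + α + 2 * M + 2 * B := by positivity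
    linarith
  have hc0 : 0 ≤ c := by linarith
  have hlip : ∀ x y : ℝ, 0 < x → x ≤ y →
      |g y - g x| ≤ c * (y - x) * (1 + 1 / (x * y) + x ^ c + y ^ c) := by
    intro x y hx hxy
    have hy : 0 < y := hx.trans_le hxy
    refine (aux_lip hd (by linarith) hM hg1 hx hxy).trans ?_
    have h1 := aux_rpow (a := 0) hy (by linarith : 0 ≤ ρ) (by linarith : ρ ≤ c)
    rw [Real.rpow_zero] at h1
    have h2 : 0 ≤ x ^ c := by positivity
    have h3 : 0 ≤ y ^ c := by positivity
    have h4 : 0 ≤ 1 / (x * y) := by positivity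
    have h5 : 0 ≤ y - x := by linarith
    calc _ ≤ M * (y - x) * (2 * (1 + 1 / (x * y) + x ^ c + y ^ c)) := by
          gcongr
          linarith
      _ = 2 * M * (y - x) * (1 + 1 / (x * y) + x ^ c + y ^ c) := by ring
      _ ≤ _ := by gcongr
  refine ⟨c, hc0, fun x y hx hy => ⟨?_, ?_, ?_, ?_⟩⟩
  · rcases le_total x y with h | h
    · have := aux_onesided hd hL hx h
      nlinarith
    · have := aux_onesided hd hL hy h
      nlinarith
  · rcases le_total x y with h | h
    · have := hlip x y hx h
      rwa [abs_sub_comm, abs_sub_comm x y, abs_of_nonneg (sub_nonneg.2 h)]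
    · have := hlip y x hy h
      rw [abs_of_nonneg (sub_nonneg.2 h)]
      rw [mul_comm y x] at this
      convert this using 2
      ring
  · have hxc : 0 ≤ x ^ c := by positivity
    rcases le_total x δ with h | h
    · have h1 := (abs_le.1 (hnear x hx h)).1
      have h2 : K * x ≤ c * (x + x ^ c) := by
        gcongr
        · linarith
        · linarith
      linarith
    · have h1 := aux_lip hd (by linarith) hM hg1 hδ h
      have h2 : M * (x - δ) * (1 + 1 / (δ * x) + x ^ ρ) ≤ M * x * (1 + 1 / δ ^ 2 + x ^ ρ) := by
        have : 0 ≤ x - δ := by linarith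
        gcongr
        · linarith
        · nlinarith
      have h3 : g δ - g x ≤ M * x * (1 + 1 / δ ^ 2 + x ^ ρ) := by
        have := (abs_le.1 h1).1
        linarith
      have h4 : -G ≤ g δ := neg_abs_le _
      have h5 : x * (-G - M * x * (1 + 1 / δ ^ 2 + x ^ ρ)) ≤ x * g x := by
        gcongr
        linarith
      have e1 : x * x * x ^ ρ = x ^ (ρ + 2) := by
        rw [Real.rpow_add hx, Real.rpow_two]
        ring
      have e2 : x * x ≤ x + x ^ (ρ + 2) := by
        have := aux_rpow (a := 1) (b := 2) (c := ρ + 2) hx (by norm_num) (by linarith)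
        rw [Real.rpow_one, Real.rpow_two] at this
        linarith
      have e3 : x ^ (ρ + 2) ≤ x + x ^ c := by
        have := aux_rpow (a := 1) hx (by linarith) hcρ
        rwa [Real.rpow_one] at this
      have e4 : α ≤ α / δ * x := by
        rw [div_mul_eq_mul_div, le_div_iff₀ hδ]
        gcongr
      have p0 : 0 ≤ x ^ (ρ + 2) := by positivity
      have t1 : α / δ * x ≤ α / δ * (x + x ^ (ρ + 2)) := by gcongr; linarith
      have t2 : G * x ≤ G * (x + x ^ (ρ + 2)) := by gcongr; linarith
      have t3 : M * (1 + 1 / δ ^ 2) * (x * x) ≤ M * (1 + 1 / δ ^ 2) * (x + x ^ (ρ + 2)) := by gcongr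
      have t4 : M * x ^ (ρ + 2) ≤ M * (x + x ^ (ρ + 2)) := by gcongr; linarith
      have t5 : B * (x + x ^ (ρ + 2)) ≤ c * (x + x ^ c) := by
        calc _ ≤ B * (2 * (x + x ^ c)) := by gcongr; linarith
          _ = 2 * B * (x + x ^ c) := by ring
          _ ≤ _ := by gcongr
      have t6 : x * (-G - M * x * (1 + 1 / δ ^ 2 + x ^ ρ)) =
          -(G * x) - M * (1 + 1 / δ ^ 2) * (x * x) - M * x ^ (ρ + 2) := by
        rw [← e1]; ring
      have t7 : B * (x + x ^ (ρ + 2)) = α / δ * (x + x ^ (ρ + 2)) + G * (x + x ^ (ρ + 2)) +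
          M * (1 + 1 / δ ^ 2) * (x + x ^ (ρ + 2)) + M * (x + x ^ (ρ + 2)) := by
        rw [hB]; ring
      linarith
  · have hx2 : x ≤ 1 + x ^ 2 := by nlinarith [sq_nonneg (x - 1)]
    rcases le_total x δ with h | h
    · have h1 := (abs_le.1 (hnear x hx h)).2
      have h2 : K * x ≤ K * (1 + x ^ 2) := by gcongr
      have h3 : α * 1 ≤ α * (1 + x ^ 2) := by gcongr; nlinarith
      have h4 : (K + α) * (1 + x ^ 2) ≤ c * (1 + x ^ 2) := by gcongr
      linarith
    · have h1 := aux_onesided hd hL hδ h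
      have h2 : g δ ≤ G := le_abs_self _
      have h6 : 0 ≤ L * δ := by positivity
      have h3 : x * g x ≤ x * (G + L * x) := by
        gcongr
        linarith
      have h4 : (G + L) * (1 + x ^ 2) ≤ c * (1 + x ^ 2) := by gcongr
      have h5 : G * x ≤ G * (1 + x ^ 2) := by gcongr
      linarith

theorem aux_bij {g g1 : ℝ → ℝ} (hd : ∀ x > 0, HasDerivAt g (g1 x) x) {α δ K L t : ℝ}
    (hα : 0 < α) (hδ : 0 < δ) (hK : 0 ≤ K) (hnear : ∀ x, 0 < x → x ≤ δ → |x * g x - α| ≤ K * x)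
    (hL : ∀ x > 0, g1 x ≤ L) (ht : 0 < t) (htL : t * L < 1) :
    BijOn (fun x => x - t * g x) (Ioi 0) univ := by
  have hhd : ∀ x > 0, HasDerivAt (fun x => x - t * g x) (1 - t * g1 x) x := fun x hx =>
    (hasDerivAt_id x).sub ((hd x hx).const_mul t)
  have hcont : ContinuousOn (fun x => x - t * g x) (Ioi 0) := fun x hx =>
    (hhd x hx).continuousAt.continuousWithinAt
  have hmono : StrictMonoOn (fun x => x - t * g x) (Ioi 0) := by
    apply strictMonoOn_of_deriv_pos (convex_Ioi 0) hcont
    intro x hx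
    rw [interior_Ioi] at hx
    rw [(hhd x hx).deriv]
    have : t * g1 x ≤ t * L := by gcongr; exact hL x hx
    linarith
  refine ⟨mapsTo_univ _ _, hmono.injOn, ?_⟩
  intro w _
  obtain ⟨x0, hx0, hx0w⟩ : ∃ x0 > 0, x0 - t * g x0 ≤ w := by
    refine ⟨min (min δ 1) (t * α / (1 + t * K + |w|)), by positivity, ?_⟩
    set x := min (min δ 1) (t * α / (1 + t * K + |w|)) with hx
    have hxp : 0 < x := by positivity
    have h1 : x ≤ δ := (min_le_left _ _).trans (min_le_left _ _)
    have h2 : x ≤ 1 := (min_le_left _ _).trans (min_le_right _ _)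
    have h3 : x ≤ t * α / (1 + t * K + |w|) := min_le_right _ _
    rw [le_div_iff₀ (by positivity)] at h3
    have h4 := (abs_le.1 (hnear x hxp h1)).1
    have h5 : t * (α - K * x) ≤ t * (x * g x) := by gcongr; linarith
    have h6 : x * (1 + |w|) ≤ x * (t * g x) := by nlinarith
    have h7 := le_of_mul_le_mul_left h6 hxp
    linarith [neg_abs_le w]
  have hpos : 0 < 1 - t * L := by linarith
  set A := |w - (x0 - t * g x0)| / (1 - t * L) with hA
  have hA0 : 0 ≤ A := by positivity
  have h1 := aux_onesided hd hL hx0 (show x0 ≤ x0 + A by linarith)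
  have hA2 : A * (1 - t * L) = |w - (x0 - t * g x0)| := by rw [hA]; field_simp
  have h2 : w ≤ (x0 + A) - t * g (x0 + A) := by
    have h3 : t * (g (x0 + A) - g x0) ≤ t * (L * (x0 + A - x0)) := by gcongr
    have := le_abs_self (w - (x0 - t * g x0))
    nlinarith
  obtain ⟨z, hz, hz2⟩ := intermediate_value_Icc (show x0 ≤ x0 + A by linarith)
    (hcont.mono (fun z hz => lt_of_lt_of_le hx0 hz.1)) ⟨hx0w, h2⟩
  exact ⟨z, lt_of_lt_of_le hx0 hz.1, hz2⟩

theorem one_sided_Lipschitz_and_growth_properties_of_transformed_drift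
    (α : ℝ) (hα : 0 < α) (μ σ : ℝ → ℝ)
    (hμC1 : ContDiffOn ℝ 1 μ (Set.Ici 0))
    (hσcont : ContinuousOn σ (Set.Ici 0)) (hσnonneg : ∀ x : ℝ, 0 ≤ x → 0 ≤ σ x)
    (hσ0 : σ 0 = 0) (hσpos : ∀ x : ℝ, 0 < x → 0 < σ x)
    (hσσC2 : ContDiffOn ℝ 2 (fun x => σ x * σ x) (Set.Ici 0))
    (hD0pos : 0 < sqDeriv σ 0)
    (hαdef : α = 2 * μ 0 / sqDeriv σ 0 - 1 / 2)
    (hgrowth : ∃ ρ : ℝ, 1 ≤ ρ ∧ ∃ C : ℝ, ∀ᶠ x in Filter.atTop,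
      max (μ x) 0 / x + σ x / x + |μ x| / x ^ ρ
        + max (deriv (besselG μ σ) x) 0 + |deriv (besselG μ σ) x| / x ^ ρ ≤ C) :
    (∀ y : ℝ, 0 ≤ y → IntegrableOn (fun z => (σ z)⁻¹) (Set.Ioc 0 y))
    ∧ Set.BijOn (besselPhi σ) (Set.Ici 0) (Set.Ici 0)
    ∧ ContDiffOn ℝ 1 (besselInv σ) (Set.Ioi 0)
    ∧ (∀ x : ℝ, 0 < x → 0 < σ (besselInv σ x))
    ∧ ContDiffOn ℝ 1 (besselG μ σ) (Set.Ioi 0)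
    ∧ besselL μ σ ≠ ⊤
    ∧ (∀ t : ℝ, 0 < t → ENNReal.ofReal t * besselL μ σ < 1 →
        Set.BijOn (fun x => x - t * besselG μ σ x) (Set.Ioi 0) Set.univ)
    ∧ (∃ C : ℝ, ∀ᶠ x in 𝓝[>] (0:ℝ),
        (|μ x - μ 0| + |sqDeriv σ x - sqDeriv σ 0|) / σ x ≤ C)
    ∧ ∃ c : ℝ, 0 ≤ c ∧ ∀ x y : ℝ, 0 < x → 0 < y →
        (x - y) * (besselG μ σ x - besselG μ σ y) ≤ (besselL μ σ).toReal * (x - y) ^ 2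
        ∧ |besselG μ σ x - besselG μ σ y|
            ≤ c * |x - y| * (1 + 1 / (x * y) + x ^ c + y ^ c)
        ∧ α - c * (x + x ^ c) ≤ x * besselG μ σ x
        ∧ x * besselG μ σ x ≤ c * (1 + x ^ 2) := by
  have hu : UniqueDiffOn ℝ (Ici (0:ℝ)) := uniqueDiffOn_Ici 0
  have hFC1 : ContDiffOn ℝ 1 (sqDeriv σ) (Ici 0) :=
    hσσC2.derivWithin hu (by norm_num)
  obtain ⟨-, hfd, -⟩ := aux_c1 (hσσC2.of_le (by norm_num))
  obtain ⟨hF1c, hFd, KF, hKF, hF⟩ := aux_c1 hFC1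
  obtain ⟨hμ1c, hμd, Kμ, hKμ, hμ⟩ := aux_c1 hμC1
  set F1 := derivWithin (sqDeriv σ) (Ici 0) with hF1
  set μ1 := derivWithin μ (Ici 0) with hμ1
  set D := sqDeriv σ 0 with hD
  have hfd : ∀ x > 0, HasDerivAt (fun x => σ x * σ x) (sqDeriv σ x) x := hfd
  -- lower bound for the squared diffusion near zero
  obtain ⟨δ₀, hδ₀, hδ₀1, hlow⟩ : ∃ δ₀ > 0, δ₀ ≤ 1 ∧
      ∀ x, 0 < x → x ≤ δ₀ → D / 2 * x ≤ σ x * σ x := by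
    refine ⟨min 1 (D / (2 * (KF + 1))), by positivity, min_le_left _ _, fun x hx hx2 => ?_⟩
    have hx1 := hx2.trans (min_le_left _ _)
    have hx3 := hx2.trans (min_le_right _ _)
    obtain ⟨ξ, hξ, h⟩ := aux_mvt hx (hσσC2.continuousOn.mono Icc_subset_Ici_self)
      (fun y hy => hfd y hy.1)
    simp only [hσ0, mul_zero, sub_zero] at h
    rw [h]
    have h1 := (abs_le.1 (hF ξ ⟨hξ.1.le, hξ.2.le.trans hx1⟩).2).1
    have h2 : KF * ξ ≤ D / 2 := by
      rw [le_div_iff₀ (by positivity)] at hx3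
      have := hξ.2
      have := hξ.1
      nlinarith
    gcongr
    linarith
  obtain ⟨ρ, hρ, C, hC⟩ := hgrowth
  have hpieces : ∀ᶠ x in atTop, σ x / x ≤ C ∧ deriv (besselG μ σ) x ≤ C ∧
      |deriv (besselG μ σ) x| ≤ C * x ^ ρ := by
    filter_upwards [hC, eventually_gt_atTop 0] with x hx hx0
    have h1 : 0 ≤ max (μ x) 0 / x := div_nonneg (le_max_right _ _) hx0.le
    have h2 : 0 ≤ σ x / x := div_nonneg (hσnonneg x hx0.le) hx0.le
    have h3 : 0 ≤ |μ x| / x ^ ρ := by positivity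
    have h4 : 0 ≤ max (deriv (besselG μ σ) x) 0 := le_max_right _ _
    have h5 : 0 ≤ |deriv (besselG μ σ) x| / x ^ ρ := by positivity
    have h6 := le_max_left (deriv (besselG μ σ) x) 0
    refine ⟨by linarith, by linarith, ?_⟩
    rw [← div_le_iff₀ (by positivity)]
    linarith
  obtain ⟨hint, hbij, hmono, hφ0, hφd⟩ := aux_phi hσcont hσpos (half_pos hD0pos) hδ₀ hlow
    (hpieces.mono fun x hx => hx.1)
  obtain ⟨hψ0, hψpos, hψc, hψd⟩ := aux_inv hσpos hbij hmono hφ0 hφd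
  have hψmaps : MapsTo (besselInv σ) (Ici 0) (Ici 0) := by
    intro x hx
    rcases (show (0:ℝ) ≤ x from hx).eq_or_lt with h | h
    · rw [← h, hψ0]; exact mem_Ici.2 le_rfl
    · exact (hψpos x h).le
  have hψmaps' : MapsTo (besselInv σ) (Ioi 0) (Ici 0) := fun x hx => (hψpos x hx).le
  have hψc' : ContinuousOn (besselInv σ) (Ioi 0) := hψc.mono Ioi_subset_Ici_self
  have hσd : ∀ x > 0, HasDerivAt σ (sqDeriv σ x / (2 * σ x)) x := by
    intro x hx
    have h1 := (hfd x hx).sqrt (mul_pos (hσpos x hx) (hσpos x hx)).ne'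
    rw [Real.sqrt_mul_self (hσnonneg x hx.le)] at h1
    refine h1.congr_of_eventuallyEq ?_
    filter_upwards [Ioi_mem_nhds hx] with y hy
    rw [Real.sqrt_mul_self (hσnonneg y (le_of_lt hy))]
  have huc : ContinuousOn (fun x => σ (besselInv σ x)) (Ici 0) := hσcont.comp hψc hψmaps
  have huc' := huc.mono (Ioi_subset_Ici_self (a := (0:ℝ)))
  have hupos : ∀ x > 0, 0 < σ (besselInv σ x) := fun x hx => hσpos _ (hψpos x hx)
  have hud : ∀ x > 0, HasDerivAt (fun x => σ (besselInv σ x)) (sqDeriv σ (besselInv σ x) / 2) x := by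
    intro x hx
    have := (hσd _ (hψpos x hx)).comp x (hψd x hx)
    refine this.congr_deriv ?_
    have := (hupos x hx).ne'
    field_simp
  set m : ℝ → ℝ := fun y => μ y - (1 / 4) * sqDeriv σ y with hmdef
  set m1 : ℝ → ℝ := fun y => μ1 y - (1 / 4) * F1 y with hm1def
  have hmd : ∀ y > 0, HasDerivAt m (m1 y) y := fun y hy =>
    (hμd y hy).sub ((hFd y hy).const_mul _)
  have hmc : ContinuousOn m (Ici 0) :=
    hμC1.continuousOn.sub (continuousOn_const.mul hFC1.continuousOn)
  have hm1c : ContinuousOn m1 (Ici 0) := hμ1c.sub (continuousOn_const.mul hF1c)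
  have hm0 : m 0 = α * D / 2 := by
    simp only [hmdef]
    rw [hαdef]
    have := hD0pos.ne'
    field_simp
    ring
  obtain ⟨δ, hδ, K, hK, hnear⟩ := aux_near (m := m) (m1 := m1) (F := sqDeriv σ)
    (u := fun x => σ (besselInv σ x)) (K := Kμ + KF) hD0pos hα (by positivity)
    hψ0 hψpos hψc hψd (by simp only [hψ0, hσ0]) huc hud
    (fun y hy => (hF y hy).2.trans (by have := hy.1; gcongr; linarith))
    (fun y hy => by
      rw [← hm0]
      have h1 := abs_le.1 (hF y hy).2
      have h2 := abs_le.1 (hμ y hy).2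
      have h3 : 0 ≤ KF * y := mul_nonneg hKF hy.1
      simp only [hmdef]
      rw [abs_le]
      constructor <;> nlinarith)
    (fun y hy => by
      have h1 := abs_le.1 (hF y hy).1
      have h2 := abs_le.1 (hμ y hy).1
      simp only [hm1def]
      rw [abs_le]
      constructor <;> linarith)
  set g1 : ℝ → ℝ := fun x => m1 (besselInv σ x) -
    m (besselInv σ x) * sqDeriv σ (besselInv σ x) / (2 * σ (besselInv σ x) ^ 2) with hg1def
  have hgd : ∀ x > 0, HasDerivAt (besselG μ σ) (g1 x) x := by
    intro x hx
    have h1 := ((hmd _ (hψpos x hx)).comp x (hψd x hx)).div (hud x hx) (hupos x hx).ne'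
    refine h1.congr_deriv ?_
    simp only [hg1def, Function.comp]
    have := (hupos x hx).ne'
    field_simp
  have hg1c : ContinuousOn g1 (Ioi 0) := by
    refine (hm1c.comp hψc' hψmaps').sub (((hmc.comp hψc' hψmaps').mul
      (hFC1.continuousOn.comp hψc' hψmaps')).div (continuousOn_const.mul (huc'.pow 2)) ?_)
    intro x hx
    have := hupos x hx
    positivity
  obtain ⟨M, hM, hM1, hM2⟩ := aux_bounds (ρ := ρ) (C := C) hg1c hδ hK
    (fun x hx hx2 => (hnear x hx hx2).2.1) (fun x hx hx2 => (hnear x hx hx2).2.2) (by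
      filter_upwards [hpieces, eventually_gt_atTop 0] with x hx hx0
      rw [(hgd x hx0).deriv] at hx
      exact hx.2)
  have hLtop : besselL μ σ ≠ ⊤ := by
    refine ne_top_of_le_ne_top (ENNReal.ofReal_ne_top (r := M)) ?_
    refine iSup₂_le fun z hz => ?_
    rw [(hgd z hz).deriv]
    exact ENNReal.ofReal_le_ofReal (hM1 z hz)
  have hL : ∀ x > 0, g1 x ≤ (besselL μ σ).toReal := by
    intro x hx
    rw [← ENNReal.ofReal_le_iff_le_toReal hLtop, ← (hgd x hx).deriv]
    exact le_iSup₂ (f := fun z (_ : z ∈ Ioi (0:ℝ)) => ENNReal.ofReal (deriv (besselG μ σ) z)) x hx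
  have hn : ∀ x, 0 < x → x ≤ δ → |x * besselG μ σ x - α| ≤ K * x := fun x hx hx2 =>
    (hnear x hx hx2).1
  refine ⟨hint, hbij, aux_contDiffOn hψd huc', hupos, aux_contDiffOn hgd hg1c, hLtop, ?_, ?_, ?_⟩
  · intro t ht htL
    refine aux_bij hgd hα hδ hK hn hL ht ?_
    have := ENNReal.toReal_mono ENNReal.one_ne_top htL.le
    rw [← ENNReal.ofReal_toReal hLtop, ← ENNReal.ofReal_mul ht.le, ENNReal.ofReal_lt_one] at htL
    exact htL
  · refine ⟨(Kμ + KF) / √(D / 2), ?_⟩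
    filter_upwards [Ioc_mem_nhdsGT hδ₀] with x hx
    have hx1 : x ≤ 1 := hx.2.trans hδ₀1
    have h1 : √(D / 2) * x ≤ σ x := by
      rw [← abs_of_nonneg (hσnonneg x hx.1.le)]
      apply Real.le_sqrt_of_sq_le _ |>.trans_eq (Real.sqrt_sq_eq_abs _)
      rw [mul_pow, Real.sq_sqrt (by positivity)]
      have h2 := hlow x hx.1 hx.2
      have h3 : D / 2 * x ^ 2 ≤ D / 2 * x := by
        gcongr
        nlinarith [hx.1]
      linarith [sq (σ x)]
    have hs : 0 < √(D / 2) := Real.sqrt_pos.2 (by positivity)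
    have hx0 := hx.1
    calc _ ≤ (Kμ * x + KF * x) / (√(D / 2) * x) := by
          gcongr
          · exact (hμ x ⟨hx0.le, hx1⟩).2
          · exact (hF x ⟨hx0.le, hx1⟩).2
      _ = _ := by field_simp
  · exact aux_final hgd hα hδ hK hn hρ ENNReal.toReal_nonneg hL hM hM2

end
end
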